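/- arXiv:2505.08131 — 3 statements merged into one kernel-verified Lean document; each statement's English description precedes it below -/
import Mathlib

section
/- Let m ≥ 4 be an even integer and let G_m be the graph with vertex set {v_{i,j} : 1 ≤ i ≤ m, 1 ≤ j ≤ 6} and the following edges: for each i, the 5-cycle v_{i,1}v_{i,2}, v_{i,2}v_{i,3}, v_{i,3}v_{i,4}, v_{i,4}v_{i,5}, v_{i,5}v_{i,1}; for each i, the edges v_{i,6}v_{i,j} for j ∈ {1,2,3,4}; for each even i, the edges v_{i,1}v_{i+1,1}, v_{i,2}v_{i+1,5}, v_{i,5}v_{i+1,2}; and for each odd i, the edges v_{i,4}v_{i+1,4}, v_{i,3}v_{i+1,5}, v_{i,5}v_{i+1,3}, where the first index is taken modulo m. Then G_m is 4-regular and G_m is 3/2-tough, i.e., every vertex set S whose removal leaves at least 2 connected components satisfies 2|S| ≥ 3·ω(G_m − S). -/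
open SimpleGraph

/-- `numComp G S` is ω(G − S): the number of connected components of the graph
obtained from `G` by deleting the vertex set `S`. -/
noncomputable def numComp {V : Type*} (G : SimpleGraph V) (S : Set V) : ℕ :=
  Nat.card (G.induce Sᶜ).ConnectedComponent

/-- The degree of a vertex, as the cardinality of its neighbor set. -/
noncomputable def ndeg {V : Type*} (G : SimpleGraph V) (v : V) : ℕ :=
  (G.neighborSet v).ncard

/-- Base (asymmetric) edge relation of the graph `G_m` from the paper.
Vertices are pairs `(i, j)` with `i : ZMod m` (paper index `i` taken mod `m`) and
`j : Fin 6` (paper index `j` shifted to `0,…,5`).  For each block `i` we have the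
5-cycle `j = 0,1,2,3,4` and the hub `j = 5` joined to `j = 0,1,2,3`; for even `i`
(paper-even, since `m` is even) the cross edges `(i,0)(i+1,0)`, `(i,1)(i+1,4)`,
`(i,4)(i+1,1)`; for odd `i` the cross edges `(i,3)(i+1,3)`, `(i,2)(i+1,4)`,
`(i,4)(i+1,2)`. -/
def gmRel (m : ℕ) (x y : ZMod m × Fin 6) : Prop :=
  (x.1 = y.1 ∧
    ((x.2 = 0 ∧ y.2 = 1) ∨ (x.2 = 1 ∧ y.2 = 2) ∨ (x.2 = 2 ∧ y.2 = 3) ∨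
     (x.2 = 3 ∧ y.2 = 4) ∨ (x.2 = 4 ∧ y.2 = 0) ∨
     (x.2 = 5 ∧ (y.2 = 0 ∨ y.2 = 1 ∨ y.2 = 2 ∨ y.2 = 3)))) ∨
  (y.1 = x.1 + 1 ∧ x.1.val % 2 = 0 ∧
    ((x.2 = 0 ∧ y.2 = 0) ∨ (x.2 = 1 ∧ y.2 = 4) ∨ (x.2 = 4 ∧ y.2 = 1))) ∨
  (y.1 = x.1 + 1 ∧ x.1.val % 2 = 1 ∧
    ((x.2 = 3 ∧ y.2 = 3) ∨ (x.2 = 2 ∧ y.2 = 4) ∨ (x.2 = 4 ∧ y.2 = 2)))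

/-- The graph `G_m`. -/
def Gm (m : ℕ) : SimpleGraph (ZMod m × Fin 6) := SimpleGraph.fromRel (gmRel m)

/-- Edges inside a cell, in the parity-free labelling of `Gm.vertexEquiv`. -/
def cellEdges : List (Fin 6 × Fin 6) :=
  [(0, 1), (1, 2), (2, 3), (3, 4), (4, 0), (5, 0), (5, 1), (5, 2), (5, 3)]

/-- Edges from a cell to the next one, in the parity-free labelling of `Gm.vertexEquiv`. -/
def linkEdges : List (Fin 6 × Fin 6) := [(0, 3), (1, 4), (4, 2)]

/-! ### Subsets of a cell as bit masks -/

/-- The bit mask of a subset of a cell. -/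
def bitMask (p : Fin 6 → Bool) : ℕ :=
  (p 0).toNat + 2 * (p 1).toNat + 4 * (p 2).toNat + 8 * (p 3).toNat + 16 * (p 4).toNat +
    32 * (p 5).toNat

theorem bitMask_lt (p : Fin 6 → Bool) : bitMask p < 64 := by
  have h := fun j => Bool.toNat_le (p j)
  have := h 0; have := h 1; have := h 2; have := h 3; have := h 4; have := h 5
  unfold bitMask
  omega

theorem testBit_bitMask (p : Fin 6 → Bool) (j : Fin 6) : (bitMask p).testBit j = p j := by
  unfold bitMask
  generalize h0 : p 0 = b0
  generalize h1 : p 1 = b1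
  generalize h2 : p 2 = b2
  generalize h3 : p 3 = b3
  generalize h4 : p 4 = b4
  generalize h5 : p 5 = b5
  fin_cases j
  · simp only [Fin.zero_eta, h0]; clear * -; revert b0 b1 b2 b3 b4 b5; decide
  · simp only [Fin.mk_one, h1]; clear * -; revert b0 b1 b2 b3 b4 b5; decide
  · simp only [Fin.reduceFinMk, h2]; clear * -; revert b0 b1 b2 b3 b4 b5; decide
  · simp only [Fin.reduceFinMk, h3]; clear * -; revert b0 b1 b2 b3 b4 b5; decide
  · simp only [Fin.reduceFinMk, h4]; clear * -; revert b0 b1 b2 b3 b4 b5; decide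
  · simp only [Fin.reduceFinMk, h5]; clear * -; revert b0 b1 b2 b3 b4 b5; decide

/-- The number of vertices of a cell outside the mask `A`. -/
def deadCount (A : ℕ) : ℕ := ∑ j : Fin 6, (!A.testBit j).toNat

/-- `c` is a union of connected components of the subgraph of a cell induced by `A`. -/
def cellClosed (A c : ℕ) : Bool :=
  Nat.beq (c &&& A) c && cellEdges.all fun e =>
    !A.testBit e.1 || !A.testBit e.2 || (c.testBit e.1 == c.testBit e.2)

theorem cellClosed_iff {A c : ℕ} : cellClosed A c ↔ c &&& A = c ∧
    ∀ e ∈ cellEdges, A.testBit e.1 → A.testBit e.2 → c.testBit e.1 = c.testBit e.2 := by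
  simp only [cellClosed, Bool.and_eq_true, Nat.beq_eq, List.all_eq_true, Bool.or_eq_true,
    beq_iff_eq, Bool.not_eq_true', or_assoc]
  refine and_congr_right fun _ => forall₂_congr fun e _ => ?_
  cases A.testBit e.1 <;> cases A.testBit e.2 <;> simp

/-- `c` has no vertex adjacent to a vertex of `B` in the previous cell. -/
def unlinked (B c : ℕ) : Bool := linkEdges.all fun e => !(B.testBit e.1 && c.testBit e.2)

theorem unlinked_iff {B c : ℕ} :
    unlinked B c ↔ ∀ e ∈ linkEdges, B.testBit e.1 → ¬ c.testBit e.2 := by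
  simp only [unlinked, List.all_eq_true]
  refine forall₂_congr fun e _ => ?_
  cases B.testBit e.1 <;> cases c.testBit e.2 <;> simp

/-- One round of spreading the set `c` along the edges of a cell inside `A`. -/
def cellSpread (A c : ℕ) : ℕ :=
  cellEdges.foldl (fun c e => if A.testBit e.1 && A.testBit e.2 && (c.testBit e.1 || c.testBit e.2)
    then c ||| (1 <<< e.1.val) ||| (1 <<< e.2.val) else c) c

/-- `j` is the least vertex of its component in the subgraph of a cell induced by `A`, and that
component is not linked to the set `B` in the previous cell. -/
def freeRep (B A : ℕ) (j : Fin 6) : Bool :=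
  A.testBit j && Nat.beq ((cellSpread A)^[3] (1 <<< j.val) % 2 ^ j.val) 0 &&
    unlinked B ((cellSpread A)^[3] (1 <<< j.val))

/-- The number of components of a cell not linked to the previous cell. -/
def freeCount (B A : ℕ) : ℕ := ∑ j : Fin 6, (freeRep B A j).toNat

/-- A potential making the sum of `2 * deadCount - 3 * freeCount` telescope along the necklace. -/
def linkPotential (A : ℕ) : ℕ :=
  match A.testBit 0, A.testBit 1, A.testBit 4 with
  | false, false, true => 1
  | false, true, false => 2
  | true, false, false => 2
  | false, false, false => 3
  | _, _, _ => 0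

/-- The masks of sets of vertices that have neighbours in the next cell. -/
def linkMasks : List ℕ := [0, 1, 2, 3, 16, 17, 18, 19]

set_option synthInstance.maxSize 16384 in
theorem land_mem_linkMasks : ∀ A < 64, A &&& 19 ∈ linkMasks ∧
    linkPotential (A &&& 19) = linkPotential A ∧
    ∀ e ∈ linkEdges, (A &&& 19).testBit e.1 = A.testBit e.1 := by
  decide +kernel

theorem freeCount_le_of_mem_linkMasks : ∀ B ∈ linkMasks, ∀ A < 64,
    3 * freeCount B A + linkPotential A ≤ 2 * deadCount A + linkPotential B := by
  decide +kernel

set_option synthInstance.maxSize 16384 in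
theorem exists_freeRep_of_unlinked : ∀ A < 64, ∀ c < 64, cellClosed A c → c ≠ 0 →
    ∀ B ∈ linkMasks, unlinked B c → ∃ j : Fin 6, freeRep B A j ∧ c.testBit j := by
  decide +kernel

set_option synthInstance.maxSize 16384 in
theorem deadCount_of_split : ∀ A < 64, ∀ c < 64, cellClosed A c → c ≠ 0 → c ≠ A →
    2 ≤ deadCount A ∧ (deadCount A = 2 →
      (∃ e ∈ linkEdges, c.testBit e.1) ∧ ∃ e ∈ linkEdges, c.testBit e.2) := by
  decide +kernel

set_option synthInstance.maxSize 16384 in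
theorem testBit_of_three_parts : ∀ A < 64, ∀ c < 64, cellClosed A c → c ≠ 0 →
    ∀ d < 64, cellClosed A d → d ≠ 0 → (∀ j : Fin 6, c.testBit j → ¬ d.testBit j) →
      ∀ j : Fin 6, A.testBit j → ¬ c.testBit j → ¬¬ d.testBit j := by
  decide +kernel

theorem testBit_of_deadCount_eq_zero :
    ∀ A < 64, deadCount A = 0 → ∀ j : Fin 6, A.testBit j := by
  decide +kernel

/-! ### Necklaces of cells -/

theorem ZMod.two_ne_zero_of_three_le {m : ℕ} (hm : 3 ≤ m) : (2 : ZMod m) ≠ 0 := by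
  intro h
  have h2 : ((2 : ℕ) : ZMod m) = 0 := by exact_mod_cast h
  rw [ZMod.natCast_eq_zero_iff] at h2
  have := Nat.le_of_dvd (by norm_num) h2
  omega

section Necklace

variable {V : Type*} {m : ℕ}

open Classical in
/-- The mask of the vertices of cell `i` outside `S`. -/
noncomputable def aliveMask (vert : ZMod m × Fin 6 ≃ V) (S : Set V) (i : ZMod m) : ℕ :=
  bitMask fun j => decide (vert (i, j) ∉ S)

/-- The component `C` of `G - S` contains the vertex `j` of cell `i`. -/
def Hits {G : SimpleGraph V} {S : Set V} (vert : ZMod m × Fin 6 ≃ V)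
    (C : (G.induce Sᶜ).ConnectedComponent) (i : ZMod m) (j : Fin 6) : Prop :=
  ∃ h : vert (i, j) ∈ Sᶜ, (G.induce Sᶜ).connectedComponentMk ⟨vert (i, j), h⟩ = C

open Classical in
/-- The mask of the vertices of cell `i` in the component `C` of `G - S`. -/
noncomputable def compMask {G : SimpleGraph V} {S : Set V} (vert : ZMod m × Fin 6 ≃ V)
    (C : (G.induce Sᶜ).ConnectedComponent) (i : ZMod m) : ℕ :=
  bitMask fun j => decide (Hits vert C i j)

variable {G : SimpleGraph V} {S : Set V} {vert : ZMod m × Fin 6 ≃ V}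
  {C D : (G.induce Sᶜ).ConnectedComponent} {i k : ZMod m} {a b j : Fin 6}

theorem testBit_aliveMask : (aliveMask vert S i).testBit j = true ↔ vert (i, j) ∉ S := by
  simp [aliveMask, testBit_bitMask]

theorem testBit_compMask : (compMask vert C i).testBit j = true ↔ Hits vert C i j := by
  simp [compMask, testBit_bitMask]

theorem exists_hits (C : (G.induce Sᶜ).ConnectedComponent) : ∃ i j, Hits vert C i j := by
  induction C using SimpleGraph.ConnectedComponent.ind with | _ v
  obtain ⟨v, hv⟩ := v
  obtain ⟨⟨i, j⟩, rfl⟩ := vert.surjective v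
  exact ⟨i, j, hv, rfl⟩

theorem Hits.eq (hC : Hits vert C i j) (hD : Hits vert D i j) : C = D := by
  obtain ⟨_, rfl⟩ := hC
  obtain ⟨_, rfl⟩ := hD
  rfl

theorem Hits.of_adj (h : Hits vert C i a) (hadj : G.Adj (vert (i, a)) (vert (k, b)))
    (hb : vert (k, b) ∉ S) : Hits vert C k b := by
  obtain ⟨ha, rfl⟩ := h
  refine ⟨hb, SimpleGraph.ConnectedComponent.sound (SimpleGraph.Adj.reachable ?_)⟩
  exact hadj.symm

theorem compMask_ne_zero (h : Hits vert C i j) : compMask vert C i ≠ 0 := by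
  intro h0
  simpa [h0] using testBit_compMask.2 h

theorem cellClosed_compMask
    (hcell : ∀ i, ∀ e ∈ cellEdges, G.Adj (vert (i, e.1)) (vert (i, e.2))) :
    cellClosed (aliveMask vert S i) (compMask vert C i) := by
  refine cellClosed_iff.2 ⟨?_, ?_⟩
  · unfold compMask aliveMask
    refine Nat.eq_of_testBit_eq fun n => ?_
    by_cases hn : n < 6
    · have h1 := testBit_compMask (vert := vert) (C := C) (i := i) (j := ⟨n, hn⟩)
      have h2 := testBit_aliveMask (vert := vert) (S := S) (i := i) (j := ⟨n, hn⟩)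
      rw [Nat.testBit_and, Bool.eq_iff_iff, Bool.and_eq_true]
      exact ⟨And.left, fun h => ⟨h, h2.2 (h1.1 h).1⟩⟩
    · have h64 : 64 ≤ 2 ^ n := Nat.pow_le_pow_right (n := 2) (by norm_num) (show 6 ≤ n by omega)
      simp [Nat.testBit_lt_two_pow ((bitMask_lt _).trans_le h64)]
  · intro e he h1 h2
    rw [testBit_aliveMask] at h1 h2
    rw [Bool.eq_iff_iff, testBit_compMask, testBit_compMask]
    exact ⟨fun h => h.of_adj (hcell i e he) h2, fun h => h.of_adj (hcell i e he).symm h1⟩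

theorem ncard_eq_sum_deadCount [NeZero m] (vert : ZMod m × Fin 6 ≃ V) (S : Set V) :
    S.ncard = ∑ i, deadCount (aliveMask vert S i) := by
  classical
  have h1 : S.ncard = (vert ⁻¹' S).ncard :=
    (Set.ncard_preimage_of_injective_subset_range vert.injective (by simp)).symm
  rw [h1, Set.ncard_eq_toFinset_card', Set.toFinset_card, Fintype.card_subtype, Finset.card_filter,
    Fintype.sum_prod_type]
  refine Finset.sum_congr rfl fun i _ => Finset.sum_congr rfl fun j _ => ?_
  simp only [aliveMask, testBit_bitMask, Set.mem_preimage]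
  by_cases h : vert (i, j) ∈ S <;> simp [h]

/-- A component avoiding some cell has a first cell, where it has no link to the previous one. -/
theorem exists_freeRep_hits [NeZero m]
    (hcell : ∀ i, ∀ e ∈ cellEdges, G.Adj (vert (i, e.1)) (vert (i, e.2)))
    (hlink : ∀ i, ∀ e ∈ linkEdges, G.Adj (vert (i, e.1)) (vert (i + 1, e.2)))
    (hC : ∃ k, ∀ j, ¬ Hits vert C k j) :
    ∃ i j, freeRep (aliveMask vert S (i - 1) &&& 19) (aliveMask vert S i) j ∧ Hits vert C i j := by
  obtain ⟨i, ⟨j, hj⟩, hi⟩ : ∃ i, (∃ j, Hits vert C i j) ∧ ∀ j, ¬ Hits vert C (i - 1) j := by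
    by_contra! hcon
    obtain ⟨k, hk⟩ := hC
    obtain ⟨i, j, hij⟩ := exists_hits (vert := vert) C
    have key : ∀ n : ℕ, ∃ j, Hits vert C (i - n) j := by
      intro n
      induction n with
      | zero => exact ⟨j, by simpa using hij⟩
      | succ n ih =>
        have := hcon _ ih
        rwa [sub_sub, ← Nat.cast_succ] at this
    obtain ⟨j', hj'⟩ := key (i - k).val
    rw [ZMod.natCast_zmod_val, sub_sub_cancel] at hj'
    exact hk j' hj'
  obtain ⟨hm, -, hB⟩ := land_mem_linkMasks (aliveMask vert S (i - 1)) (bitMask_lt _)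
  have hun : unlinked (aliveMask vert S (i - 1) &&& 19) (compMask vert C i) := by
    refine unlinked_iff.2 fun e he h1 h2 => ?_
    rw [hB e he, testBit_aliveMask] at h1
    rw [testBit_compMask] at h2
    have hadj := hlink (i - 1) e he
    rw [sub_add_cancel] at hadj
    exact hi _ (h2.of_adj hadj.symm h1)
  obtain ⟨j, hj1, hj2⟩ := exists_freeRep_of_unlinked (aliveMask vert S i) (bitMask_lt _)
    (compMask vert C i) (bitMask_lt _) (cellClosed_compMask hcell) (compMask_ne_zero hj) _ hm hun
  exact ⟨i, j, hj1, testBit_compMask.1 hj2⟩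

theorem three_mul_numComp_le_of_forall_missed [NeZero m]
    (hcell : ∀ i, ∀ e ∈ cellEdges, G.Adj (vert (i, e.1)) (vert (i, e.2)))
    (hlink : ∀ i, ∀ e ∈ linkEdges, G.Adj (vert (i, e.1)) (vert (i + 1, e.2)))
    (hC : ∀ C : (G.induce Sᶜ).ConnectedComponent, ∃ k, ∀ j, ¬ Hits vert C k j) :
    3 * numComp G S ≤ 2 * S.ncard := by
  classical
  choose f g hfg hits using fun C => exists_freeRep_hits hcell hlink (hC C)
  let reps : Finset (ZMod m × Fin 6) := Finset.univ.filter fun p =>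
    freeRep (aliveMask vert S (p.1 - 1) &&& 19) (aliveMask vert S p.1) p.2
  have hcard : numComp G S ≤ reps.card := by
    rw [numComp, ← Nat.card_eq_finsetCard reps]
    refine Nat.card_le_card_of_injective
      (fun C => ⟨(f C, g C), Finset.mem_filter.2 ⟨Finset.mem_univ _, hfg C⟩⟩) fun C D h => ?_
    obtain ⟨h1, h2⟩ := Prod.mk.inj (Subtype.mk.inj h)
    have hD := hits D
    rw [← h1, ← h2] at hD
    exact (hits C).eq hD
  have hreps : reps.card =
      ∑ i, freeCount (aliveMask vert S (i - 1) &&& 19) (aliveMask vert S i) := by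
    rw [Finset.card_filter, Fintype.sum_prod_type]
    refine Finset.sum_congr rfl fun i _ => Finset.sum_congr rfl fun j _ => ?_
    cases freeRep (aliveMask vert S (i - 1) &&& 19) (aliveMask vert S i) j <;> rfl
  have hsum : ∑ i : ZMod m, (3 * freeCount (aliveMask vert S (i - 1) &&& 19) (aliveMask vert S i) +
        linkPotential (aliveMask vert S i)) ≤
      ∑ i : ZMod m, (2 * deadCount (aliveMask vert S i) +
        linkPotential (aliveMask vert S (i - 1))) := by
    refine Finset.sum_le_sum fun i _ => ?_
    obtain ⟨hm, hpot, -⟩ := land_mem_linkMasks (aliveMask vert S (i - 1)) (bitMask_lt _)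
    rw [← hpot]
    exact freeCount_le_of_mem_linkMasks _ hm _ (bitMask_lt _)
  have hshift : ∑ i : ZMod m, linkPotential (aliveMask vert S (i - 1)) =
      ∑ i, linkPotential (aliveMask vert S i) :=
    Equiv.sum_comp (Equiv.subRight 1) fun i => linkPotential (aliveMask vert S i)
  rw [Finset.sum_add_distrib, Finset.sum_add_distrib, ← Finset.mul_sum, ← Finset.mul_sum, hshift,
    ← hreps, ← ncard_eq_sum_deadCount] at hsum
  omega

/-- Two distinct components meeting the same cell. -/
theorem deadCount_of_hits_ne
    (hcell : ∀ i, ∀ e ∈ cellEdges, G.Adj (vert (i, e.1)) (vert (i, e.2)))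
    (hne : D ≠ C) (hC : Hits vert C i a) (hD : Hits vert D i b) :
    2 ≤ deadCount (aliveMask vert S i) ∧ (deadCount (aliveMask vert S i) = 2 →
      (∃ e ∈ linkEdges, Hits vert D i e.1) ∧ ∃ e ∈ linkEdges, Hits vert D i e.2) := by
  have h := deadCount_of_split (aliveMask vert S i) (bitMask_lt _) (compMask vert D i)
    (bitMask_lt _) (cellClosed_compMask hcell) (compMask_ne_zero hD) ?_
  · simpa only [testBit_compMask] using h
  · intro heq
    refine hne (Hits.eq (testBit_compMask.1 ?_) hC)
    rw [heq, testBit_aliveMask]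
    exact hC.1

/-- At most two components meet a cell. -/
theorem eq_of_hits_of_hits_ne
    (hcell : ∀ i, ∀ e ∈ cellEdges, G.Adj (vert (i, e.1)) (vert (i, e.2)))
    {E : (G.induce Sᶜ).ConnectedComponent} (hD : D ≠ C) (hE : E ≠ C) (hCi : Hits vert C i a)
    (hDi : Hits vert D i b) (hEi : Hits vert E i j) : D = E := by
  by_contra hDE
  refine testBit_of_three_parts (aliveMask vert S i) (bitMask_lt _) (compMask vert C i)
    (bitMask_lt _) (cellClosed_compMask hcell) (compMask_ne_zero hCi) (compMask vert D i)
    (bitMask_lt _) (cellClosed_compMask hcell) (compMask_ne_zero hDi) ?_ j ?_ ?_ ?_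
  · intro l hl hl'
    rw [testBit_compMask] at hl hl'
    exact hD (hl'.eq hl)
  · rw [testBit_aliveMask]
    exact hEi.1
  · rw [testBit_compMask]
    exact fun h => hE (hEi.eq h)
  · rw [testBit_compMask]
    exact fun h => hDE (h.eq hEi)

theorem three_mul_numComp_le_of_forall_hit [NeZero m] (hm : 3 ≤ m)
    (hcell : ∀ i, ∀ e ∈ cellEdges, G.Adj (vert (i, e.1)) (vert (i, e.2)))
    (hlink : ∀ i, ∀ e ∈ linkEdges, G.Adj (vert (i, e.1)) (vert (i + 1, e.2)))
    (hS : 2 ≤ numComp G S) (hC : ∀ k, ∃ j, Hits vert C k j) :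
    3 * numComp G S ≤ 2 * S.ncard := by
  classical
  have : Finite V := Finite.of_equiv _ vert
  have : Fintype (G.induce Sᶜ).ConnectedComponent := Fintype.ofFinite _
  choose c hc using hC
  let N : Finset (ZMod m) := Finset.univ.filter fun i => ∃ D, D ≠ C ∧ ∃ j, Hits vert D i j
  have hN : ∀ i, i ∈ N ↔ ∃ D, D ≠ C ∧ ∃ j, Hits vert D i j := fun i => by simp [N]
  have hcard : numComp G S ≤ N.card + 1 := by
    choose f g hfg using fun D : (G.induce Sᶜ).ConnectedComponent => exists_hits (vert := vert) D
    have h1 : (Finset.univ.erase C).card ≤ N.card := by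
      refine Finset.card_le_card_of_injOn f (fun D hD => ?_) fun D hD E hE h => ?_
      · exact (hN _).2 ⟨D, Finset.ne_of_mem_erase hD, g D, hfg D⟩
      · have hE' := hfg E
        rw [← h] at hE'
        exact eq_of_hits_of_hits_ne hcell (Finset.ne_of_mem_erase hD) (Finset.ne_of_mem_erase hE)
          (hc _) (hfg D) hE'
    rw [numComp, Nat.card_eq_fintype_card]
    rw [Finset.card_erase_of_mem (Finset.mem_univ C), Finset.card_univ] at h1
    omega
  let w : ZMod m → ℕ := fun i => 2 * deadCount (aliveMask vert S i) - if i ∈ N then 3 else 0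
  have hdead : ∀ i ∈ N, 2 ≤ deadCount (aliveMask vert S i) := fun i hi => by
    obtain ⟨D, hne, j, hD⟩ := (hN i).1 hi
    exact (deadCount_of_hits_ne hcell hne (hc i) hD).1
  have hsum : 2 * S.ncard = ∑ i, w i + 3 * N.card := by
    have h3 : 3 * N.card = ∑ i, if i ∈ N then 3 else 0 := by simp [mul_comm]
    rw [ncard_eq_sum_deadCount vert S, h3, ← Finset.sum_add_distrib, Finset.mul_sum]
    refine Finset.sum_congr rfl fun i _ => ?_
    by_cases hi : i ∈ N
    · have := hdead i hi
      simp only [w, hi, if_true]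
      omega
    · simp [w, hi]
  have hpos : ∀ k, k ∈ N ∨ deadCount (aliveMask vert S k) ≠ 0 → 1 ≤ w k := by
    intro k hk
    by_cases hkN : k ∈ N
    · have := hdead k hkN
      simp only [w, hkN, if_true]
      omega
    · have := hk.resolve_left hkN
      simp only [w, hkN, if_false]
      omega
  have halive : ∀ k D a i, D ≠ C → Hits vert D i a → (∃ b, G.Adj (vert (i, a)) (vert (k, b))) →
      1 ≤ w k := by
    rintro k D a i hne hD ⟨b, hadj⟩
    refine hpos k (or_iff_not_imp_right.2 fun h0 => ?_)
    have hb := testBit_of_deadCount_eq_zero _ (bitMask_lt _) (not_not.1 h0) b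
    exact (hN k).2 ⟨D, hne, b, hD.of_adj hadj (testBit_aliveMask.1 hb)⟩
  have hw : 3 ≤ ∑ i, w i := by
    obtain ⟨D, hne⟩ : ∃ D, D ≠ C := by
      have : Nontrivial (G.induce Sᶜ).ConnectedComponent := by
        rw [← Finite.one_lt_card_iff_nontrivial]
        exact hS
      exact exists_ne C
    obtain ⟨i, j, hD⟩ := exists_hits (vert := vert) D
    have hi : i ∈ N := (hN i).2 ⟨D, hne, j, hD⟩
    obtain ⟨h2, hports⟩ := deadCount_of_hits_ne hcell hne (hc i) hD
    obtain h2 | h3 := h2.eq_or_lt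
    · obtain ⟨⟨e, he, hDe⟩, e', he', hDe'⟩ := hports h2.symm
      have hnext := halive (i + 1) D _ i hne hDe ⟨_, hlink i e he⟩
      have hadj := hlink (i - 1) e' he'
      rw [sub_add_cancel] at hadj
      have hprev := halive (i - 1) D _ i hne hDe' ⟨_, hadj.symm⟩
      have hself := hpos i (Or.inl hi)
      have : Fact (1 < m) := ⟨by omega⟩
      have hne1 : i - 1 ≠ i := by simp
      have hne2 : i ≠ i + 1 := by simp
      have hne3 : i - 1 ≠ i + 1 := fun h => ZMod.two_ne_zero_of_three_le hm (by
        linear_combination -h)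
      calc 3 ≤ w (i - 1) + (w i + w (i + 1)) := by omega
        _ = ∑ k ∈ {i - 1, i, i + 1}, w k := by
          rw [Finset.sum_insert (by simp [hne1, hne3]), Finset.sum_pair hne2]
        _ ≤ ∑ k, w k := Finset.sum_le_sum_of_subset (Finset.subset_univ _)
    · refine le_trans ?_ (Finset.single_le_sum (fun k _ => Nat.zero_le (w k)) (Finset.mem_univ i))
      simp only [w, hi, if_true]
      omega
  omega

/-- Toughness of any graph containing the necklace of `m` cells. -/
theorem three_mul_numComp_le_of_necklace (hm : 3 ≤ m)
    (hcell : ∀ i, ∀ e ∈ cellEdges, G.Adj (vert (i, e.1)) (vert (i, e.2)))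
    (hlink : ∀ i, ∀ e ∈ linkEdges, G.Adj (vert (i, e.1)) (vert (i + 1, e.2)))
    (hS : 2 ≤ numComp G S) : 3 * numComp G S ≤ 2 * S.ncard := by
  have : NeZero m := ⟨by omega⟩
  by_cases hC : ∃ C : (G.induce Sᶜ).ConnectedComponent, ∀ k, ∃ j, Hits vert C k j
  · obtain ⟨C, hC⟩ := hC
    exact three_mul_numComp_le_of_forall_hit hm hcell hlink hS hC
  · push Not at hC
    exact three_mul_numComp_le_of_forall_missed hcell hlink hC

end Necklace

/-! ### The graph `G_m` as a necklace -/

/-- The reflection of a cell used to identify odd cells with even ones. -/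
def cellFlip : Fin 6 → Fin 6 := ![3, 2, 1, 0, 4, 5]

theorem cellFlip_cellFlip (j : Fin 6) : cellFlip (cellFlip j) = j := by
  revert j; decide

/-- The renaming of the vertices of `G_m` that makes all cells alike. -/
def Gm.vertexEquiv (m : ℕ) : ZMod m × Fin 6 ≃ ZMod m × Fin 6 :=
  Function.Involutive.toPerm (fun p => (p.1, if p.1.val % 2 = 0 then p.2 else cellFlip p.2)) <| by
    rintro ⟨i, j⟩
    by_cases h : i.val % 2 = 0 <;> simp [h, cellFlip_cellFlip]

theorem Gm.vertexEquiv_apply (m : ℕ) (p : ZMod m × Fin 6) :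
    Gm.vertexEquiv m p = (p.1, if p.1.val % 2 = 0 then p.2 else cellFlip p.2) := rfl

theorem ZMod.val_add_one_mod_two {m : ℕ} [NeZero m] (hm : Even m) (i : ZMod m) :
    (i + 1).val % 2 = (i.val + 1) % 2 := by
  rw [ZMod.val_add, Nat.mod_mod_of_dvd _ hm.two_dvd, Nat.add_mod, Nat.add_mod i.val 1]
  have : ((1 : ZMod m).val) % 2 = 1 % 2 := by
    rw [← Nat.cast_one, ZMod.val_natCast, Nat.mod_mod_of_dvd _ hm.two_dvd]
  rw [this]

theorem Gm.adj_vertexEquiv_iff {m : ℕ} (hm4 : 4 ≤ m) (hme : Even m) (i k : ZMod m) (a b : Fin 6) :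
    (Gm m).Adj (Gm.vertexEquiv m (i, a)) (Gm.vertexEquiv m (k, b)) ↔
      (k = i ∧ ((a, b) ∈ cellEdges ∨ (b, a) ∈ cellEdges)) ∨
        (k = i + 1 ∧ (a, b) ∈ linkEdges) ∨ (i = k + 1 ∧ (b, a) ∈ linkEdges) := by
  have : NeZero m := ⟨by omega⟩
  have : Fact (1 < m) := ⟨by omega⟩
  have hi : (i + 1).val % 2 = (i.val + 1) % 2 := ZMod.val_add_one_mod_two hme i
  have hk : (k + 1).val % 2 = (k.val + 1) % 2 := ZMod.val_add_one_mod_two hme k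
  by_cases h1 : k = i
  · subst h1
    obtain h | h := Nat.mod_two_eq_zero_or_one k.val <;> fin_cases a <;> fin_cases b <;>
      simp [Gm, gmRel, Gm.vertexEquiv_apply, cellFlip, cellEdges, linkEdges, h]
  by_cases h2 : k = i + 1
  · subst h2
    have h3 : i ≠ i + 1 + 1 := fun h =>
      ZMod.two_ne_zero_of_three_le (m := m) (by omega) (by linear_combination -h)
    obtain h | h := Nat.mod_two_eq_zero_or_one i.val
    · have h' : (i + 1).val % 2 = 1 := by omega
      fin_cases a <;> fin_cases b <;>
        simp [Gm, gmRel, Gm.vertexEquiv_apply, cellFlip, linkEdges, h, h', h3]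
    · have h' : (i + 1).val % 2 = 0 := by omega
      fin_cases a <;> fin_cases b <;>
        simp [Gm, gmRel, Gm.vertexEquiv_apply, cellFlip, linkEdges, h, h', h3]
  by_cases h3 : i = k + 1
  · subst h3
    obtain h | h := Nat.mod_two_eq_zero_or_one k.val
    · have h' : (k + 1).val % 2 = 1 := by omega
      fin_cases a <;> fin_cases b <;>
        simp [Gm, gmRel, Gm.vertexEquiv_apply, cellFlip, linkEdges, h, h', h2]
    · have h' : (k + 1).val % 2 = 0 := by omega
      fin_cases a <;> fin_cases b <;>
        simp [Gm, gmRel, Gm.vertexEquiv_apply, cellFlip, linkEdges, h, h', h2]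
  · simp [Gm, gmRel, Gm.vertexEquiv_apply, h1, h2, h3, Ne.symm h1]

theorem Gm.ndeg_eq_four {m : ℕ} (hm4 : 4 ≤ m) (hme : Even m) (v : ZMod m × Fin 6) :
    ndeg (Gm m) v = 4 := by
  obtain ⟨⟨i, a⟩, rfl⟩ := (Gm.vertexEquiv m).surjective v
  have : NeZero m := ⟨by omega⟩
  have : Fact (1 < m) := ⟨by omega⟩
  have hnbr : ∀ t : Finset (ZMod m × Fin 6), (∀ l b,
      (Gm m).Adj (Gm.vertexEquiv m (i, a)) (Gm.vertexEquiv m (l, b)) ↔ (l, b) ∈ t) →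
        ndeg (Gm m) (Gm.vertexEquiv m (i, a)) = t.card := by
    intro t ht
    rw [ndeg, ← Set.ncard_coe_finset, ← Set.ncard_preimage_of_injective_subset_range
      (Gm.vertexEquiv m).injective (s := (Gm m).neighborSet _) (by simp)]
    congr 1
    ext ⟨l, b⟩
    exact ht l b
  have hprev : ∀ l : ZMod m, i = l + 1 ↔ l = i - 1 := fun l => by
    rw [eq_sub_iff_add_eq, eq_comm]
  simp only [Gm.adj_vertexEquiv_iff hm4 hme, hprev] at hnbr
  fin_cases a
  · rw [hnbr {(i, 1), (i, 4), (i, 5), (i + 1, 3)} fun l b => ?_]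
    · simp
    · fin_cases b <;> simp [cellEdges, linkEdges]
  · rw [hnbr {(i, 0), (i, 2), (i, 5), (i + 1, 4)} fun l b => ?_]
    · simp
    · fin_cases b <;> simp [cellEdges, linkEdges]
  · rw [hnbr {(i, 1), (i, 3), (i, 5), (i - 1, 4)} fun l b => ?_]
    · simp
    · fin_cases b <;> simp [cellEdges, linkEdges]
  · rw [hnbr {(i, 2), (i, 4), (i, 5), (i - 1, 0)} fun l b => ?_]
    · simp
    · fin_cases b <;> simp [cellEdges, linkEdges]
  · rw [hnbr {(i, 3), (i, 0), (i + 1, 2), (i - 1, 1)} fun l b => ?_]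
    · simp
    · fin_cases b <;> simp [cellEdges, linkEdges]
  · rw [hnbr {(i, 0), (i, 1), (i, 2), (i, 3)} fun l b => ?_]
    · simp
    · fin_cases b <;> simp [cellEdges, linkEdges]

/-- for every even `m ≥ 4`, the graph `G_m` is 4-regular and
3/2-tough: every vertex set `S` whose removal leaves at least 2 components
satisfies `2|S| ≥ 3·ω(G_m − S)`. -/
theorem Gm_four_regular_and_three_halves_tough (m : ℕ) (hm4 : 4 ≤ m) (hme : Even m) :
    (∀ v : ZMod m × Fin 6, ndeg (Gm m) v = 4) ∧
    (∀ S : Set (ZMod m × Fin 6), 2 ≤ numComp (Gm m) S →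
      3 * numComp (Gm m) S ≤ 2 * S.ncard) := by
  refine ⟨Gm.ndeg_eq_four hm4 hme, fun S hS =>
    three_mul_numComp_le_of_necklace (vert := Gm.vertexEquiv m) (by omega) ?_ ?_ hS⟩
  · exact fun i e he => (Gm.adj_vertexEquiv_iff hm4 hme i i e.1 e.2).2 (Or.inl ⟨rfl, Or.inl he⟩)
  · exact fun i e he =>
      (Gm.adj_vertexEquiv_iff hm4 hme i (i + 1) e.1 e.2).2 (Or.inr (Or.inl ⟨rfl, he⟩))
end

section
/- Let m ≥ 4 be an even integer and let G_m be the graph with vertex set {v_{i,j} : 1 ≤ i ≤ m, 1 ≤ j ≤ 6} and the following edges: for each i, the 5-cycle v_{i,1}v_{i,2}, v_{i,2}v_{i,3}, v_{i,3}v_{i,4}, v_{i,4}v_{i,5}, v_{i,5}v_{i,1}; for each i, the edges v_{i,6}v_{i,j} for j ∈ {1,2,3,4}; for each even i, the edges v_{i,1}v_{i+1,1}, v_{i,2}v_{i+1,5}, v_{i,5}v_{i+1,2}; and for each odd i, the edges v_{i,4}v_{i+1,4}, v_{i,3}v_{i+1,5}, v_{i,5}v_{i+1,3}, where the first index is taken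 modulo m. Then G_m is minimally 3/2-tough: G_m is 3/2-tough, and for every edge e of G_m there exists a vertex set S such that ω((G_m − e) − S) ≥ 2 and 2|S| < 3·ω((G_m − e) − S). -/
open SimpleGraph

namespace GmTough

/-- Adjacency inside a block. -/
def blockAdj (a b : Fin 6) : Bool :=
  [(0, 1), (1, 2), (2, 3), (3, 4), (4, 0), (5, 0), (5, 1), (5, 2), (5, 3)].any
    fun e => e = (a, b) ∨ e = (b, a)

/-- The three attachment vertices of a block, on the side where the even (`false`)
respectively odd (`true`) cross edges leave. -/
def port (p : Bool) : Fin 3 → Fin 6 := bif p then ![3, 2, 4] else ![0, 1, 4]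

/-- Attachment vertex `k` is joined to attachment vertex `swap k` of the neighbouring block. -/
def swap : Fin 3 → Fin 3 := ![0, 2, 1]

/-- The parity of a block index. -/
def par {m : ℕ} (i : ZMod m) : Bool := decide (i.val % 2 = 1)

/-- The position of a vertex in a block, after reflecting the block if `p` holds. -/
def orient (p : Bool) (j : Fin 6) : Fin 6 := bif p then ![3, 2, 1, 0, 4, 5] j else j

/-- The potential of the trace of a colouring on the attachment vertices of one side;
`0` marks deleted vertices. -/
def pot (q : Fin 3 → Fin 3) : ℤ :=
  if q 0 = 0 then
    if q 1 = 0 then (if q 2 = 0 then 3 else 1)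
    else if q 2 = 0 then 2 else if q 1 = q 2 then -1 else -2
  else if q 1 = 0 then if q 2 = 0 then 2 else if q 0 = q 2 then -1 else 0
  else if q 0 = q 1 then if q 2 = 0 then -2 else if q 0 = q 2 then -3 else 0
  else 0

/-- The number of vertices of colour `z` in a block. -/
def deleted {α : Type*} [DecidableEq α] (z : α) (f : Fin 6 → α) : ℕ :=
  (Finset.univ.filter fun j => f j = z).card

/-- `f` colours a block such that adjacent vertices of colours other than `z` agree. -/
def Proper {α : Type*} (z : α) (f : Fin 6 → α) : Prop :=
  ∀ a b, blockAdj a b → f a ≠ z → f b ≠ z → f a = f b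

instance (f : Fin 6 → Fin 3) : Decidable (Proper 0 f) := by unfold Proper; infer_instance

/-- The colours other than `z` that occur in a block. -/
def colours {α : Type*} [DecidableEq α] (z : α) (f : Fin 6 → α) : Finset α :=
  (Finset.univ.filter fun j => f j ≠ z).image f

/-- The cross edges between two sides whose ends have colours other than `z` and `w`. -/
def links {α β : Type*} [DecidableEq α] [DecidableEq β] (z : α) (w : β) (f : Fin 3 → α)
    (g : Fin 3 → β) : Finset (Fin 3) :=
  Finset.univ.filter fun k => f k ≠ z ∧ g (swap k) ≠ w

set_option maxRecDepth 100000 in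
theorem block_bound : ∀ f : Fin 6 → Fin 3, Proper 0 f →
    pot (f ∘ port false) + pot (f ∘ port true) + 6 * (colours 0 f).card ≤ 4 * deleted 0 f := by
  decide +kernel

set_option maxRecDepth 100000 in
theorem link_bound : ∀ f g : Fin 3 → Fin 3,
    (∀ k ∈ links 0 0 f g, ∀ l ∈ links 0 0 f g, f k = f l ↔ g (swap k) = g (swap l)) →
    0 ≤ 6 * (((links 0 0 f g).image f).card : ℤ) + pot f + pot g := by
  decide +kernel

theorem two_le_deleted : ∀ f : Fin 6 → Fin 3, Proper 0 f → 2 ≤ (colours 0 f).card →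
    2 ≤ deleted 0 f := by
  decide +kernel

theorem exists_two_coloured_ports : ∀ f : Fin 6 → Fin 3, Proper 0 f → 2 ≤ (colours 0 f).card →
    deleted 0 f ≤ 2 → ∀ p : Bool, ∃ k : Fin 3, ∃ l : Fin 3,
      f (port p k) ≠ 0 ∧ f (port p l) ≠ 0 ∧ f (port p k) ≠ f (port p l) := by
  decide +kernel

theorem no_deleted : ∀ f : Fin 6 → Fin 3, Proper 0 f → (∀ j, f j ≠ 0) → ∀ j k, f j = f k := by
  decide +kernel

theorem colours_card_le : ∀ f : Fin 6 → Fin 3, (colours 0 f).card ≤ 2 := by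
  decide +kernel

theorem swap_swap : ∀ k, swap (swap k) = k := by decide

theorem blockAdj_of_three : ∀ a b c : Fin 6, a = b ∨ a = c ∨ b = c ∨
    blockAdj a b ∨ blockAdj a c ∨ blockAdj b c := by
  decide

theorem card_image_eq_of_iff {ι α β : Type*} [DecidableEq α] [DecidableEq β] (s : Finset ι)
    (f : ι → α) (g : ι → β) (h : ∀ a ∈ s, ∀ b ∈ s, f a = f b ↔ g a = g b) :
    (s.image f).card = (s.image g).card := by
  have hf : ((s.image fun a => (f a, g a)).image Prod.fst).card =
      (s.image fun a => (f a, g a)).card := by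
    refine Finset.card_image_of_injOn ?_
    simp only [Set.InjOn, Finset.coe_image, Set.forall_mem_image]
    exact fun a ha b hb hab => Prod.ext hab ((h a ha b hb).1 hab)
  have hg : ((s.image fun a => (f a, g a)).image Prod.snd).card =
      (s.image fun a => (f a, g a)).card := by
    refine Finset.card_image_of_injOn ?_
    simp only [Set.InjOn, Finset.coe_image, Set.forall_mem_image]
    exact fun a ha b hb hab => Prod.ext ((h a ha b hb).2 hab) hab
  rw [Finset.image_image] at hf hg
  exact hf.trans hg.symm

/-- A proper colouring of a block uses at most two colours, so it can be recoded by `Fin 3`. -/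
theorem Proper.exists_recoding {α : Type*} [DecidableEq α] {z : α} {f : Fin 6 → α}
    (hf : Proper z f) : ∃ χ : Fin 6 → Fin 3, (∀ j, χ j = 0 ↔ f j = z) ∧
      ∀ j k, χ j = χ k ↔ f j = f k := by
  by_cases h : ∃ j, f j ≠ z
  · obtain ⟨a, ha⟩ := h
    refine ⟨fun j => if f j = z then 0 else if f j = f a then 1 else 2, ?_, ?_⟩
    · intro j
      dsimp only
      split_ifs <;> simp_all
    · intro j k
      have := blockAdj_of_three a j k
      have h1 := hf a j
      have h2 := hf a k
      have h3 := hf j k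
      dsimp only
      split_ifs <;> grind
  · push Not at h
    exact ⟨fun _ => 0, by simp [h], by simp [h]⟩

theorem gm_adj_of_blockAdj {m : ℕ} (i : ZMod m) : ∀ {a b : Fin 6}, blockAdj a b →
    (Gm m).Adj (i, a) (i, b) := by
  intro a b h
  have hab : a ≠ b := by revert h; revert a b; decide
  have h' : ((a = 0 ∧ b = 1) ∨ (a = 1 ∧ b = 2) ∨ (a = 2 ∧ b = 3) ∨
     (a = 3 ∧ b = 4) ∨ (a = 4 ∧ b = 0) ∨
     (a = 5 ∧ (b = 0 ∨ b = 1 ∨ b = 2 ∨ b = 3))) ∨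
     ((b = 0 ∧ a = 1) ∨ (b = 1 ∧ a = 2) ∨ (b = 2 ∧ a = 3) ∨
     (b = 3 ∧ a = 4) ∨ (b = 4 ∧ a = 0) ∨
     (b = 5 ∧ (a = 0 ∨ a = 1 ∨ a = 2 ∨ a = 3))) := by revert h; clear hab; revert a b; decide
  simp only [Gm, SimpleGraph.fromRel_adj]
  refine ⟨by simp [hab], h'.imp (fun h => Or.inl ⟨rfl, h⟩) fun h => Or.inl ⟨rfl, h⟩⟩

theorem one_ne_zero_of_four_le {m : ℕ} (hm : 4 ≤ m) : (1 : ZMod m) ≠ 0 := by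
  have : Fact (1 < m) := ⟨by omega⟩
  exact one_ne_zero

theorem gm_adj_of_link {m : ℕ} (hm : 4 ≤ m) (i : ZMod m) (k : Fin 3) :
    (Gm m).Adj (i, port (par i) k) (i + 1, port (par i) (swap k)) := by
  simp only [Gm, SimpleGraph.fromRel_adj]
  refine ⟨by simp [one_ne_zero_of_four_le hm], Or.inl (Or.inr ?_)⟩
  rcases Nat.mod_two_eq_zero_or_one i.val with h | h
  · left
    fin_cases k <;> simp [h, par, port, swap]
  · right
    fin_cases k <;> simp [h, par, port, swap]

theorem gm_adj_cases {m : ℕ} {x y : ZMod m × Fin 6} (h : (Gm m).Adj x y) :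
    (x.1 = y.1 ∧ blockAdj x.2 y.2) ∨
    (y.1 = x.1 + 1 ∧ ∃ k, x.2 = port (par x.1) k ∧ y.2 = port (par x.1) (swap k)) ∨
    (x.1 = y.1 + 1 ∧ ∃ k, y.2 = port (par y.1) k ∧ x.2 = port (par y.1) (swap k)) := by
  have key : ∀ x y : ZMod m × Fin 6, gmRel m x y → (x.1 = y.1 ∧ blockAdj x.2 y.2) ∨
    (y.1 = x.1 + 1 ∧ ∃ k, x.2 = port (par x.1) k ∧ y.2 = port (par x.1) (swap k)) := by
    rintro ⟨i, a⟩ ⟨j, b⟩ (⟨h, h'⟩ | ⟨h, hp, h'⟩ | ⟨h, hp, h'⟩)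
    · refine Or.inl ⟨h, ?_⟩
      dsimp only at h' ⊢
      clear h
      revert a b; decide
    · refine Or.inr ⟨h, ?_⟩
      have : par i = false := by simpa [par] using hp
      dsimp only at h' ⊢
      rw [this]
      clear h hp this
      revert a b; decide
    · refine Or.inr ⟨h, ?_⟩
      have : par i = true := by simpa [par] using hp
      dsimp only at h' ⊢
      rw [this]
      clear h hp this
      revert a b; decide
  have symm : ∀ a b : Fin 6, blockAdj a b → blockAdj b a := by decide
  rcases (SimpleGraph.fromRel_adj _ _ _ |>.1 h).2 with h | h
  · rcases key _ _ h with h | h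
    · exact Or.inl h
    · exact Or.inr (Or.inl h)
  · rcases key _ _ h with h | h
    · exact Or.inl ⟨h.1.symm, symm _ _ h.2⟩
    · exact Or.inr (Or.inr h)

theorem par_add {m : ℕ} (hm : 4 ≤ m) (he : Even m) (i j : ZMod m) :
    par (i + j) = xor (par i) (par j) := by
  have : NeZero m := ⟨by omega⟩
  have h : (i + j).val % 2 = (i.val + j.val) % 2 := by
    rw [ZMod.val_add, Nat.mod_mod_of_dvd _ he.two_dvd]
  simp only [par, h]
  rcases Nat.mod_two_eq_zero_or_one i.val with hi | hi <;>
    rcases Nat.mod_two_eq_zero_or_one j.val with hj | hj <;> simp [Nat.add_mod, hi, hj]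

theorem par_add_one {m : ℕ} (hm : 4 ≤ m) (he : Even m) (i : ZMod m) :
    par (i + 1) = !par i := by
  have : Fact (1 < m) := ⟨by omega⟩
  rw [par_add hm he]
  simp [par, ZMod.val_one]

section Toughness

variable {m : ℕ} {K : Type*} {κ : ZMod m × Fin 6 → Option K}

/-- `κ` colours the components left after deleting the vertices of colour `none`. -/
def IsComponentColouring (κ : ZMod m × Fin 6 → Option K) : Prop :=
  ∀ x y, (Gm m).Adj x y → κ x ≠ none → κ y ≠ none → κ x = κ y

/-- The restriction of a colouring to a block. -/
def restrict (κ : ZMod m × Fin 6 → Option K) (i : ZMod m) (j : Fin 6) : Option K := κ (i, j)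

theorem IsComponentColouring.proper (h : IsComponentColouring κ) (i : ZMod m) :
    Proper none (restrict κ i) :=
  fun _ _ hab => h _ _ (gm_adj_of_blockAdj i hab)

theorem IsComponentColouring.link_eq (hm : 4 ≤ m) (h : IsComponentColouring κ) {i : ZMod m}
    {k : Fin 3} (hk : κ (i, port (par i) k) ≠ none)
    (hk' : κ (i + 1, port (par i) (swap k)) ≠ none) :
    κ (i, port (par i) k) = κ (i + 1, port (par i) (swap k)) :=
  h _ _ (gm_adj_of_link hm i k) hk hk'

variable [DecidableEq K]

/-- The colours on the cross edges from block `i` to block `i + 1`. -/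
def crossing (κ : ZMod m × Fin 6 → Option K) (i : ZMod m) : Finset (Option K) :=
  (links none none (restrict κ i ∘ port (par i)) (restrict κ (i + 1) ∘ port (par i))).image
    (restrict κ i ∘ port (par i))

theorem mem_colours {i : ZMod m} {c : Option K} :
    c ∈ colours none (restrict κ i) ↔ c ≠ none ∧ ∃ j, κ (i, j) = c := by
  simp only [colours, Finset.mem_image, Finset.mem_filter, Finset.mem_univ, true_and]
  constructor
  · rintro ⟨j, hj, rfl⟩
    exact ⟨hj, j, rfl⟩
  · rintro ⟨hc, j, rfl⟩
    exact ⟨j, hc, rfl⟩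

theorem crossing_subset_left (i : ZMod m) :
    crossing κ i ⊆ colours none (restrict κ i) := by
  intro c hc
  simp only [crossing, links, Finset.mem_image, Finset.mem_filter] at hc
  obtain ⟨k, hk, rfl⟩ := hc
  exact mem_colours.2 ⟨hk.2.1, _, rfl⟩

theorem crossing_subset_right (hm : 4 ≤ m) (h : IsComponentColouring κ) (i : ZMod m) :
    crossing κ i ⊆ colours none (restrict κ (i + 1)) := by
  intro c hc
  simp only [crossing, links, Finset.mem_image, Finset.mem_filter] at hc
  obtain ⟨k, hk, rfl⟩ := hc
  exact mem_colours.2 ⟨hk.2.1, _, (h.link_eq hm hk.2.1 hk.2.2).symm⟩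

theorem deleted_eq {α β : Type*} [DecidableEq α] [DecidableEq β] {z : α} {w : β} {f : Fin 6 → α}
    {g : Fin 6 → β} (h : ∀ j, g j = w ↔ f j = z) : deleted w g = deleted z f := by
  simp only [deleted, h]

theorem colours_card_eq {α β : Type*} [DecidableEq α] [DecidableEq β] {z : α} {w : β}
    {f : Fin 6 → α} {g : Fin 6 → β} (h : ∀ j, g j = w ↔ f j = z)
    (h' : ∀ j k, g j = g k ↔ f j = f k) : (colours w g).card = (colours z f).card := by
  simp only [colours, ne_eq, h]
  exact card_image_eq_of_iff _ _ _ fun a _ b _ => h' a b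

theorem Proper.recoding {α β : Type*} {z : α} {w : β}
    {f : Fin 6 → α} {g : Fin 6 → β} (hf : Proper z f) (h : ∀ j, g j = w ↔ f j = z)
    (h' : ∀ j k, g j = g k ↔ f j = f k) : Proper w g := by
  intro a b hab ha hb
  exact (h' a b).2 (hf a b hab (by simpa [h] using ha) (by simpa [h] using hb))

theorem exists_pot (hm : 4 ≤ m) (he : Even m) (h : IsComponentColouring κ) :
    ∃ l r : ZMod m → ℤ,
      (∀ i, l i + r i + 6 * (colours none (restrict κ i)).card ≤
        4 * deleted none (restrict κ i)) ∧
      ∀ i, 0 ≤ 6 * ((crossing κ i).card : ℤ) + r i + l (i + 1) := by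
  choose χ hχ hχ' using fun i => (h.proper i).exists_recoding
  refine ⟨fun i => pot (χ i ∘ port (!par i)), fun i => pot (χ i ∘ port (par i)), ?_, ?_⟩
  · intro i
    have := block_bound (χ i) ((h.proper i).recoding (hχ i) (hχ' i))
    rw [deleted_eq (hχ i), colours_card_eq (hχ i) (hχ' i)] at this
    dsimp only
    cases par i
    · rw [add_comm (pot _)]
      exact this
    · exact this
  · intro i
    dsimp only
    rw [par_add_one hm he, Bool.not_not]
    have hl : links 0 0 (χ i ∘ port (par i)) (χ (i + 1) ∘ port (par i)) =
        links none none (restrict κ i ∘ port (par i)) (restrict κ (i + 1) ∘ port (par i)) := by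
      simp only [links, Function.comp, ne_eq, hχ]
    have := link_bound (χ i ∘ port (par i)) (χ (i + 1) ∘ port (par i)) (by
      rw [hl]
      intro a ha b hb
      simp only [links, Finset.mem_filter, Finset.mem_univ, true_and] at ha hb
      simp only [Function.comp, hχ', restrict]
      rw [h.link_eq hm ha.1 ha.2, h.link_eq hm hb.1 hb.2])
    rw [hl] at this
    rwa [card_image_eq_of_iff _ (χ i ∘ port (par i)) (restrict κ i ∘ port (par i))
      fun a _ b _ => hχ' i _ _] at this

theorem three_mul_sum_colours_le [NeZero m] (hm : 4 ≤ m) (he : Even m)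
    (h : IsComponentColouring κ) :
    3 * ∑ i, (colours none (restrict κ i)).card ≤
      2 * ∑ i, deleted none (restrict κ i) + 3 * ∑ i, (crossing κ i).card := by
  obtain ⟨l, r, h1, h2⟩ := exists_pot hm he h
  have h1 := Finset.sum_le_sum fun i (_ : i ∈ Finset.univ) => h1 i
  have h2 := Finset.sum_le_sum fun i (_ : i ∈ Finset.univ) => h2 i
  have h3 : ∑ i, l (i + 1) = ∑ i, l i := Equiv.sum_comp (Equiv.addRight 1) l
  simp only [Finset.sum_add_distrib, ← Finset.mul_sum, h3, Finset.sum_const_zero] at h1 h2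
  zify
  linarith

theorem ZMod.forall_of_add_one [NeZero m] {p : ZMod m → Prop} {a : ZMod m} (ha : p a)
    (h : ∀ i, p i → p (i + 1)) (b : ZMod m) : p b := by
  have key : ∀ n : ℕ, p (a + n) := by
    intro n
    induction n with
    | zero => simpa using ha
    | succ n ih => simpa [add_assoc] using h _ ih
  simpa using key (b - a).val

theorem card_add_sum_crossing_le [NeZero m] [Fintype K] (hm : 4 ≤ m)
    (h : IsComponentColouring κ) (hs : ∀ C : K, ∃ x, κ x = some C)
    (hn : ∀ C : K, ∃ i, some C ∉ colours none (restrict κ i)) :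
    Fintype.card K + ∑ i, (crossing κ i).card ≤ ∑ i, (colours none (restrict κ i)).card := by
  have key : ∀ F : ZMod m → Finset (Option K), (∀ i, none ∉ F i) →
      ∑ i, (F i).card = ∑ C : K, (Finset.univ.filter fun i => some C ∈ F i).card := by
    intro F hF
    simp only [Finset.card_filter]
    rw [Finset.sum_comm]
    refine Finset.sum_congr rfl fun i _ => ?_
    rw [← Finset.card_filter]
    refine Eq.trans (congrArg Finset.card ?_) (Finset.card_map Function.Embedding.some)
    ext (_ | c)
    · simp [hF]
    · simp
  rw [key, key, Fintype.card_eq_sum_ones, ← Finset.sum_add_distrib]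
  · refine Finset.sum_le_sum fun C _ => ?_
    rw [add_comm]
    refine Finset.card_lt_card (Finset.ssubset_iff_subset_ne.2 ⟨?_, ?_⟩)
    · intro i
      simpa using fun hi => crossing_subset_left i hi
    · intro heq
      obtain ⟨⟨a, j⟩, hj⟩ := hs C
      obtain ⟨b, hb⟩ := hn C
      refine hb (ZMod.forall_of_add_one (p := fun i => some C ∈ colours none (restrict κ i))
        (mem_colours.2 ⟨by simp, j, hj⟩) (fun i hi => ?_) b)
      have : i ∈ Finset.univ.filter fun i => some C ∈ crossing κ i := by
        rw [heq]
        simpa using hi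
      exact crossing_subset_right hm h i (by simpa using this)
  · intro i hi
    exact (mem_colours.1 hi).1 rfl
  · intro i hi
    exact (mem_colours.1 (crossing_subset_left i hi)).1 rfl

theorem IsComponentColouring.colours_card_le (h : IsComponentColouring κ) (i : ZMod m) :
    (colours none (restrict κ i)).card ≤ 2 := by
  obtain ⟨χ, hχ, hχ'⟩ := (h.proper i).exists_recoding
  rw [← colours_card_eq hχ hχ']
  exact GmTough.colours_card_le χ

theorem IsComponentColouring.two_le_deleted (h : IsComponentColouring κ) {i : ZMod m}
    (hi : 2 ≤ (colours none (restrict κ i)).card) : 2 ≤ deleted none (restrict κ i) := by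
  obtain ⟨χ, hχ, hχ'⟩ := (h.proper i).exists_recoding
  rw [← colours_card_eq hχ hχ'] at hi
  rw [← deleted_eq hχ]
  exact GmTough.two_le_deleted χ ((h.proper i).recoding hχ hχ') hi

theorem IsComponentColouring.eq_of_deleted_eq_zero (h : IsComponentColouring κ) {i : ZMod m}
    (hi : deleted none (restrict κ i) = 0) (j k : Fin 6) :
    κ (i, j) ≠ none ∧ κ (i, j) = κ (i, k) := by
  have hd : ∀ j, restrict κ i j ≠ none := by
    simpa [deleted, Finset.filter_eq_empty_iff] using hi
  obtain ⟨χ, hχ, hχ'⟩ := (h.proper i).exists_recoding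
  exact ⟨hd j, (hχ' j k).1 (no_deleted χ ((h.proper i).recoding hχ hχ')
    (fun j => (hχ j).not.2 (hd j)) j k)⟩

theorem IsComponentColouring.exists_two_coloured_ports (h : IsComponentColouring κ) {i : ZMod m}
    (hi : 2 ≤ (colours none (restrict κ i)).card) (hd : deleted none (restrict κ i) ≤ 2)
    (p : Bool) : ∃ k l, κ (i, port p k) ≠ none ∧ κ (i, port p l) ≠ none ∧
      κ (i, port p k) ≠ κ (i, port p l) := by
  obtain ⟨χ, hχ, hχ'⟩ := (h.proper i).exists_recoding
  rw [← colours_card_eq hχ hχ'] at hi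
  rw [← deleted_eq hχ] at hd
  simpa only [ne_eq, hχ, hχ', restrict] using
    GmTough.exists_two_coloured_ports χ ((h.proper i).recoding hχ hχ') hi hd p

theorem IsComponentColouring.neighbours_deleted (hm : 4 ≤ m)
    (h : IsComponentColouring κ) {i : ZMod m} (hi : 2 ≤ (colours none (restrict κ i)).card)
    (hd : deleted none (restrict κ i) ≤ 2) :
    deleted none (restrict κ (i + 1)) ≠ 0 ∧ deleted none (restrict κ (i - 1)) ≠ 0 := by
  constructor
  · intro h0
    obtain ⟨k, l, hk, hl, hkl⟩ := h.exists_two_coloured_ports hi hd (par i)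
    have hz := h.eq_of_deleted_eq_zero h0
    apply hkl
    rw [h.link_eq hm hk (hz _ 0).1, h.link_eq hm hl (hz _ 0).1]
    exact (hz _ _).2
  · intro h0
    have hz := h.eq_of_deleted_eq_zero h0
    obtain ⟨j, rfl⟩ : ∃ j, i = j + 1 := ⟨i - 1, by ring⟩
    rw [add_sub_cancel_right] at hz
    obtain ⟨k, l, hk, hl, hkl⟩ := h.exists_two_coloured_ports hi hd (par j)
    have hk' := h.link_eq hm (k := swap k) (hz _ 0).1 (by rwa [swap_swap])
    have hl' := h.link_eq hm (k := swap l) (hz _ 0).1 (by rwa [swap_swap])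
    rw [swap_swap] at hk' hl'
    apply hkl
    rw [← hk', ← hl']
    exact (hz _ _).2

/-- If some component meets every block, the remaining components lie in different blocks. -/
theorem card_le_of_spanning_component [NeZero m] [Fintype K]
    (h : IsComponentColouring κ) (hs : ∀ C : K, ∃ x, κ x = some C)
    {R : K} (hR : ∀ i, some R ∈ colours none (restrict κ i)) :
    Fintype.card K ≤
      (Finset.univ.filter fun i => 2 ≤ (colours none (restrict κ i)).card).card + 1 := by
  choose x hx using hs
  have hmem : ∀ C, some C ∈ colours none (restrict κ (x C).1) := fun C =>
    mem_colours.2 ⟨by simp, (x C).2, hx C⟩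
  rw [← Finset.card_univ, ← Finset.card_erase_add_one (Finset.mem_univ R)]
  refine Nat.succ_le_succ (Finset.card_le_card_of_injOn (fun C => (x C).1) ?_ ?_)
  · intro C hC
    have hCR : C ≠ R := by simpa using hC
    simp only [Finset.coe_filter, Finset.mem_univ, true_and, Set.mem_ofPred_eq]
    exact Finset.one_lt_card.2 ⟨_, hmem C, _, hR _, by simpa using hCR⟩
  · intro C hC D hD hCD
    have hCR : C ≠ R := by simpa using hC
    have hDR : D ≠ R := by simpa using hD
    by_contra hne
    refine absurd (h.colours_card_le (x C).1) (not_le.2 ?_)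
    refine Finset.two_lt_card.2 ⟨_, hmem C, some D, ?_, _, hR _, by simpa using hne,
      by simpa using hCR, by simpa using hDR⟩
    dsimp only at hCD
    rw [hCD]
    exact hmem D

theorem three_mul_card_le_of_spanning_component [NeZero m] [Fintype K] (hm : 4 ≤ m)
    (h : IsComponentColouring κ) (hs : ∀ C : K, ∃ x, κ x = some C) (hK : 2 ≤ Fintype.card K)
    {R : K} (hR : ∀ i, some R ∈ colours none (restrict κ i)) :
    3 * Fintype.card K ≤ 2 * ∑ i, deleted none (restrict κ i) := by
  have hq := card_le_of_spanning_component h hs hR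
  set Q := Finset.univ.filter fun i => 2 ≤ (colours none (restrict κ i)).card with hQ
  have hQmem : ∀ {i}, i ∈ Q ↔ 2 ≤ (colours none (restrict κ i)).card := by simp [hQ]
  have hle : ∀ i ∈ Finset.univ, (if i ∈ Q then 2 else 0) ≤ deleted none (restrict κ i) := by
    intro i _
    split_ifs with hi
    · exact h.two_le_deleted (hQmem.1 hi)
    · exact Nat.zero_le _
  have hsum : ∑ i, (if i ∈ Q then 2 else 0) = 2 * Q.card := by
    simp [mul_comm]
  obtain ⟨i, hi⟩ : Q.Nonempty := Finset.card_pos.1 (by omega)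
  suffices 3 ≤ Q.card ∨ ∃ i, (if i ∈ Q then 2 else 0) < deleted none (restrict κ i) by
    rcases this with h3 | ⟨i, hi⟩
    · have := Finset.sum_le_sum hle
      omega
    · have := Finset.sum_lt_sum hle ⟨i, Finset.mem_univ i, hi⟩
      omega
  by_contra! hcon
  obtain ⟨hcard, hcon⟩ := hcon
  have hd := hcon i
  rw [if_pos hi] at hd
  obtain ⟨hr, hl⟩ := h.neighbours_deleted hm (hQmem.1 hi) hd
  have hmem : ∀ j, deleted none (restrict κ j) ≠ 0 → j ∈ Q := by
    intro j hj
    by_contra hjQ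
    have := hcon j
    rw [if_neg hjQ] at this
    omega
  refine absurd (Finset.two_lt_card.2 ⟨i, hi, i + 1, hmem _ hr, i - 1, hmem _ hl, ?_, ?_, ?_⟩)
    (not_lt.2 (by omega))
  · simpa using one_ne_zero_of_four_le hm
  · intro h1
    apply one_ne_zero_of_four_le hm
    linear_combination h1
  · intro h2
    have : ((2 : ℕ) : ZMod m) = 0 := by
      push_cast
      linear_combination h2
    have := Nat.le_of_dvd (by norm_num) ((ZMod.natCast_eq_zero_iff 2 m).1 this)
    omega

theorem three_mul_card_le [NeZero m] [Fintype K] (hm : 4 ≤ m) (he : Even m)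
    (h : IsComponentColouring κ) (hs : ∀ C : K, ∃ x, κ x = some C) (hK : 2 ≤ Fintype.card K) :
    3 * Fintype.card K ≤ 2 * ∑ i, deleted none (restrict κ i) := by
  by_cases hR : ∃ R : K, ∀ i, some R ∈ colours none (restrict κ i)
  · obtain ⟨R, hR⟩ := hR
    exact three_mul_card_le_of_spanning_component hm h hs hK hR
  · push Not at hR
    have h1 := card_add_sum_crossing_le hm h hs hR
    have h2 := three_mul_sum_colours_le hm he h
    omega

end Toughness

theorem gm_tough {m : ℕ} (hm : 4 ≤ m) (he : Even m) (S : Set (ZMod m × Fin 6))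
    (hS : 2 ≤ numComp (Gm m) S) : 3 * numComp (Gm m) S ≤ 2 * S.ncard := by
  classical
  have : NeZero m := ⟨by omega⟩
  let K := ((Gm m).induce Sᶜ).ConnectedComponent
  let := Fintype.ofFinite K
  let κ : ZMod m × Fin 6 → Option K := fun x =>
    if hx : x ∈ Sᶜ then some (((Gm m).induce Sᶜ).connectedComponentMk ⟨x, hx⟩) else none
  have hκ : ∀ x, κ x = none ↔ x ∈ S := by
    intro x
    by_cases hx : x ∈ S <;> simp [κ, hx]
  have hcol : IsComponentColouring κ := by
    intro x y hxy hx hy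
    rw [ne_eq, hκ] at hx hy
    have hx' : x ∈ Sᶜ := hx
    have hy' : y ∈ Sᶜ := hy
    simp only [κ, dif_pos hx', dif_pos hy', Option.some.injEq]
    exact SimpleGraph.ConnectedComponent.sound
      (SimpleGraph.Adj.reachable (by simpa [SimpleGraph.comap_adj] using hxy))
  have hsurj : ∀ C : K, ∃ x, κ x = some C := by
    intro C
    induction C using SimpleGraph.ConnectedComponent.ind with
    | h v => exact ⟨v, dif_pos v.2⟩
  have hcard : numComp (Gm m) S = Fintype.card K := Nat.card_eq_fintype_card
  have hdel : S.ncard = ∑ i, deleted none (restrict κ i) := by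
    rw [Set.ncard_eq_toFinset_card', ← Set.filter_mem_univ_eq_toFinset]
    simp only [deleted, restrict, Finset.card_filter, hκ]
    rw [Fintype.sum_prod_type]
  rw [hcard] at hS ⊢
  rw [hdel]
  exact three_mul_card_le hm he hcol hsurj hS

section Minimality

theorem card_le_numComp {V W : Type*} [Finite V] (G : SimpleGraph V) (S : Set V) (F : Finset V)
    (c : V → W) (hc : ∀ x y, G.Adj x y → x ∉ S → y ∉ S → c x = c y)
    (hF : ∀ x ∈ F, x ∉ S) (hinj : Set.InjOn c F) : F.card ≤ numComp G S := by
  have hreach : ∀ x y : (Sᶜ : Set V), (G.induce Sᶜ).Reachable x y → c x = c y := by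
    rintro x y ⟨w⟩
    induction w with
    | nil => rfl
    | @cons u v _ hadj _ ih => exact (hc u v hadj u.2 v.2).trans ih
  rw [← Fintype.card_coe, ← Nat.card_eq_fintype_card]
  refine Nat.card_le_card_of_injective
    (fun x : F => (G.induce Sᶜ).connectedComponentMk ⟨x, hF x x.2⟩) fun x y hxy => ?_
  exact Subtype.ext (hinj x.2 y.2 (hreach _ _ (SimpleGraph.ConnectedComponent.exact hxy)))

/-- The type of a block: blocks `0`, `1`, `-1` and `2` have the types `0`, `1`, `2` and `3`,
the remaining ones have type `4` or `5` according to their parity. -/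
def blockType {m : ℕ} (d : ZMod m) : Fin 6 :=
  if d = 0 then 0 else if d = 1 then 1 else if d = -1 then 2 else if d = 2 then 3
  else if par d then 4 else 5

/-- The possible types of consecutive blocks. -/
def nextTypes : Fin 6 → List (Fin 6) := ![[1], [3], [0], [2, 4], [5], [2, 4]]

/-- The parity of the blocks of a given type. -/
def typePar : Fin 6 → Bool := ![false, true, true, false, true, false]

/-- A colouring of the blocks of each type. The colour `some (6 * s + r)` of a vertex in block `d`
refers to the vertex `r` of block `d + s`; the colour `none` marks deleted vertices. -/
abbrev Pattern := Fin 6 → Fin 6 → Option ℤ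

namespace Pattern

variable (w : Pattern) (u v : Fin 6 × Fin 6)

/-- The representatives of the components in a block. -/
def reps (l : Fin 6) : Finset (Fin 6) := Finset.univ.filter fun j => w l j = some (j : ℤ)

/-- The contribution of a block to `2 * |S| - 3 * ω`. -/
def excess (l : Fin 6) : ℤ := 2 * deleted none (w l) - 3 * (w.reps l).card

/-- A potential witnessing that the total excess is negative. -/
def potential : Fin 6 → ℤ :=
  ![0, w.excess 0 + 1, w.excess 0 + w.excess 1 + w.excess 3 + 1, w.excess 0 + w.excess 1 + 1,
    w.excess 0 + w.excess 1 + w.excess 3 + 1,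
    w.excess 0 + w.excess 1 + w.excess 3 + w.excess 4 + 1]

/-- The pattern is constant along the edges inside blocks, except possibly for the edge between
the vertices `u` and `v`, given by their block types and positions. -/
def BlockCompatible : Prop :=
  ∀ l a b, blockAdj a b → w l a ≠ none → w l b ≠ none →
    s((l, a), (l, b)) ≠ s(u, v) → w l a = w l b

/-- The pattern is constant along the edges between blocks, except possibly for the edge between
the vertices `u` and `v`. -/
def LinkCompatible : Prop :=
  ∀ l, ∀ l' ∈ nextTypes l, ∀ k, w l (port (typePar l) k) ≠ none →
    w l' (port (typePar l) (swap k)) ≠ none →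
    s((l, port (typePar l) k), (l', port (typePar l) (swap k))) ≠ s(u, v) →
    w l (port (typePar l) k) = (w l' (port (typePar l) (swap k))).map (6 + ·)

/-- The pattern deletes few vertices compared to the number of components. -/
def Deficient : Prop :=
  (∀ l, ∀ l' ∈ nextTypes l,
    w.potential l + w.excess l + (if l = 0 then 1 else 0) ≤ w.potential l') ∧
  2 ≤ (w.reps 3).card

instance : Decidable (w.BlockCompatible u v) := by unfold BlockCompatible; infer_instance
instance : Decidable (w.LinkCompatible u v) := by unfold LinkCompatible; infer_instance
instance : Decidable w.Deficient := by unfold Deficient; infer_instance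

/-- The pattern shows that removing the edge between `u` and `v` destroys toughness. -/
def Valid : Prop :=
  w.BlockCompatible u v ∧ w.LinkCompatible u v ∧ w.Deficient

instance : Decidable (w.Valid u v) := by unfold Valid; infer_instance

variable {w u v}

theorem Valid.symm (h : w.Valid u v) : w.Valid v u := by
  unfold Valid BlockCompatible LinkCompatible at *
  rwa [Sym2.eq_swap]

end Pattern

/-- A block with four deleted and two isolated vertices. -/
def sparse : Fin 6 → Option ℤ := ![some 0, none, none, some 3, none, none]

/-- A block with two deleted vertices and two components. -/
def dense : Fin 6 → Option ℤ := ![none, some 1, some 1, none, some 4, some 1]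

theorem exists_valid_block : ∀ a b, blockAdj a b → s(a, b) ≠ s(4, 0) →
    ∃ w : Pattern, w.Valid (0, a) (0, b) := by
  have h01 : Pattern.Valid ![![some 0, some 1, none, some 3, none, none],
      ![none, some 1, none, some 3, none, none], ![some 0, none, some 2, none, none, none],
      dense, sparse, dense] (0, 0) (0, 1) := by decide +kernel
  have h12 : Pattern.Valid ![![none, some 1, some 2, none, some 4, none], sparse, sparse,
      dense, sparse, dense] (0, 1) (0, 2) := by decide +kernel
  have h23 : Pattern.Valid ![![some 0, none, some 2, some 3, none, none],
      ![none, some 1, none, some 3, none, none], ![some 0, none, some 2, none, none, none],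
      dense, sparse, dense] (0, 2) (0, 3) := by decide +kernel
  have h34 : Pattern.Valid ![![none, some 1, none, some 3, some 4, none],
      ![some 0, none, some 2, none, none, none], ![none, some 1, none, none, some 4, some 1],
      ![some 0, none, some 2, some 2, none, none], dense, sparse] (0, 3) (0, 4) := by
    decide +kernel
  have h50 : Pattern.Valid ![![some 0, none, some (-2), some (-2), none, some (-2)],
      dense, dense, sparse, dense, sparse] (0, 5) (0, 0) := by decide +kernel
  have h51 : Pattern.Valid ![![none, some 1, none, none, some 4, some 5], sparse, sparse,
      dense, sparse, dense] (0, 5) (0, 1) := by decide +kernel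
  have h52 : Pattern.Valid ![![none, none, some 2, none, some 4, some 5], sparse, sparse,
      dense, sparse, dense] (0, 5) (0, 2) := by decide +kernel
  have h53 : Pattern.Valid ![![some 0, some 0, none, some 3, none, some 0],
      ![none, some 1, some 1, none, some (-6), some 1], dense, sparse, dense, sparse]
      (0, 5) (0, 3) := by decide +kernel
  have cover : ∀ a b, blockAdj a b → s(a, b) ≠ s(4, 0) → ∃ c d : Fin 6,
      (c, d) ∈ [(0, 1), (1, 2), (2, 3), (3, 4), (5, 0), (5, 1), (5, 2), ((5, 3) : Fin 6 × Fin 6)] ∧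
      (a = c ∧ b = d ∨ a = d ∧ b = c) := by decide
  intro a b hab hne
  obtain ⟨c, d, hcd, h⟩ := cover a b hab hne
  have : ∃ w : Pattern, w.Valid (0, c) (0, d) := by
    simp only [List.mem_cons, List.not_mem_nil, or_false, Prod.mk.injEq] at hcd
    rcases hcd with ⟨rfl, rfl⟩ | ⟨rfl, rfl⟩ | ⟨rfl, rfl⟩ | ⟨rfl, rfl⟩ | ⟨rfl, rfl⟩ | ⟨rfl, rfl⟩ |
      ⟨rfl, rfl⟩ | ⟨rfl, rfl⟩
    exacts [⟨_, h01⟩, ⟨_, h12⟩, ⟨_, h23⟩, ⟨_, h34⟩, ⟨_, h50⟩, ⟨_, h51⟩, ⟨_, h52⟩, ⟨_, h53⟩]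
  rcases h with ⟨rfl, rfl⟩ | ⟨rfl, rfl⟩
  · exact this
  · obtain ⟨w, hw⟩ := this
    exact ⟨w, hw.symm⟩

theorem exists_valid_last : ∃ w : Pattern, w.Valid (1, 3) (1, 4) :=
  ⟨![![some 0, none, some 2, some 2, none, none], ![none, some 1, none, some 3, some 4, none],
    ![some 0, none, some 2, none, none, none], ![none, some 1, none, none, some 4, some 1],
    sparse, dense], by decide +kernel⟩

theorem exists_valid_link (k : Fin 3) :
    ∃ w : Pattern, w.Valid (0, port false k) (1, port false (swap k)) := by
  have h0 : Pattern.Valid ![![some 0, some 0, some 0, some 0, none, some 0],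
      ![some 0, some 0, none, some 3, none, none], ![some 0, none, some 2, none, none, none],
      dense, sparse, dense] (0, 0) (1, 0) := by decide +kernel
  have h1 : Pattern.Valid ![![some 0, some 0, none, some 0, none, some 0], dense, dense,
      sparse, dense, sparse] (0, 1) (1, 4) := by decide +kernel
  have h2 : Pattern.Valid ![dense, ![some 0, some 0, none, some 0, none, some 0], sparse,
      dense, sparse, dense] (0, 4) (1, 1) := by decide +kernel
  fin_cases k
  exacts [⟨_, h0⟩, ⟨_, h1⟩, ⟨_, h2⟩]

section Embedding

variable {m : ℕ}

theorem natCast_ne_zero (hm : 4 ≤ m) {n : ℕ} (hn : 0 < n) (hn' : n < 4) : (n : ZMod m) ≠ 0 := by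
  intro h
  have := Nat.le_of_dvd hn ((ZMod.natCast_eq_zero_iff n m).1 h)
  omega

theorem two_ne_zero_of_four_le (hm : 4 ≤ m) : (2 : ZMod m) ≠ 0 := by
  exact_mod_cast natCast_ne_zero hm (n := 2) (by norm_num) (by norm_num)

theorem three_ne_zero_of_four_le (hm : 4 ≤ m) : (3 : ZMod m) ≠ 0 := by
  exact_mod_cast natCast_ne_zero hm (n := 3) (by norm_num) (by norm_num)

theorem par_zero : par (0 : ZMod m) = false := by
  simp [par]

theorem par_one (hm : 4 ≤ m) (he : Even m) : par (1 : ZMod m) = true := by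
  rw [← zero_add (1 : ZMod m), par_add_one hm he, par_zero]
  rfl

theorem par_two (hm : 4 ≤ m) (he : Even m) : par (2 : ZMod m) = false := by
  rw [← one_add_one_eq_two, par_add_one hm he, par_one hm he]
  rfl

theorem par_neg_one (hm : 4 ≤ m) (he : Even m) : par (-1 : ZMod m) = true := by
  have := par_add_one hm he (-1 : ZMod m)
  rw [neg_add_cancel, par_zero] at this
  simpa using this.symm

theorem typePar_blockType (hm : 4 ≤ m) (he : Even m) (d : ZMod m) :
    typePar (blockType d) = par d := by
  unfold blockType
  split_ifs with h0 h1 h2 h3 h4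
  · rw [h0, par_zero]; rfl
  · rw [h1, par_one hm he]; rfl
  · rw [h2, par_neg_one hm he]; rfl
  · rw [h3, par_two hm he]; rfl
  · rw [h4]; rfl
  · rw [Bool.not_eq_true] at h4
    rw [h4]; rfl

theorem blockType_two (hm : 4 ≤ m) : blockType (2 : ZMod m) = 3 := by
  have h2 := two_ne_zero_of_four_le hm
  have h1 : (2 : ZMod m) ≠ 1 := fun h => one_ne_zero_of_four_le hm (by linear_combination h)
  have h3 : (2 : ZMod m) ≠ -1 := fun h => three_ne_zero_of_four_le hm (by linear_combination h)
  simp [blockType, h1, h2, h3]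

theorem blockType_one (hm : 4 ≤ m) : blockType (1 : ZMod m) = 1 := by
  simp [blockType, one_ne_zero_of_four_le hm]

theorem blockType_zero : blockType (0 : ZMod m) = 0 := by
  simp [blockType]

theorem blockType_eq_zero {d : ZMod m} (h : blockType d = 0) : d = 0 := by
  unfold blockType at h
  split_ifs at h <;> simp_all

theorem blockType_eq_one {d : ZMod m} (h : blockType d = 1) : d = 1 := by
  unfold blockType at h
  split_ifs at h <;> simp_all

theorem blockType_add_one (hm : 4 ≤ m) (he : Even m) (d : ZMod m) :
    blockType (d + 1) ∈ nextTypes (blockType d) := by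
  by_cases h0 : d = 0
  · rw [h0, zero_add, blockType_one hm, blockType_zero]
    decide
  by_cases h1 : d = 1
  · rw [h1, one_add_one_eq_two, blockType_one hm, blockType_two hm]
    decide
  by_cases h2 : d = -1
  · have : blockType (-1 : ZMod m) = 2 := by
      rw [h2] at h0 h1
      simp [blockType, h1, one_ne_zero_of_four_le hm]
    rw [h2, neg_add_cancel, blockType_zero, this]
    decide
  have h0' : d + 1 ≠ 0 := fun h => h2 (by linear_combination h)
  have h1' : d + 1 ≠ 1 := fun h => h0 (by linear_combination h)
  have h3' : d + 1 ≠ 2 := fun h => h1 (by linear_combination h)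
  have hne : (-1 : ZMod m) ≠ 1 := fun h =>
    two_ne_zero_of_four_le hm (by linear_combination -h)
  cases hd : par d
  · have hd' : par (d + 1) = true := by rw [par_add_one hm he, hd]; rfl
    by_cases h3 : d = 2 <;> by_cases h2' : d + 1 = -1 <;>
      simp_all [blockType, nextTypes]
  · have hd' : par (d + 1) = false := by rw [par_add_one hm he, hd]; rfl
    have h3 : d ≠ 2 := by
      rintro rfl
      simp [par_two hm he] at hd
    have h2' : d + 1 ≠ -1 := by
      intro h
      simp [h, par_neg_one hm he] at hd'
    simp [blockType, nextTypes, h0, h1, h2, h3, h0', h1', h2', h3', hd, hd']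

end Embedding

/-- The block type and the reflected position of a vertex, relative to the block `i`. -/
def label {m : ℕ} (i : ZMod m) (x : ZMod m × Fin 6) : Fin 6 × Fin 6 :=
  (blockType (x.1 - i), orient (par i) x.2)

theorem orient_orient : ∀ p j, orient p (orient p j) = j := by decide

theorem blockAdj_orient : ∀ p a b, blockAdj a b → blockAdj (orient p a) (orient p b) := by decide

theorem orient_port : ∀ p q k, orient p (port q k) = port (xor p q) k := by decide

variable {m : ℕ}

theorem label_injOn (i : ZMod m) {x y : ZMod m × Fin 6} (h : label i x = label i y)
    (hx : (label i x).1 = 0 ∨ (label i x).1 = 1) : x = y := by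
  have h2 : x.2 = y.2 := by
    rw [← orient_orient (par i) x.2, ← orient_orient (par i) y.2]
    exact congrArg _ (congrArg Prod.snd h)
  have h1 : blockType (x.1 - i) = blockType (y.1 - i) := congrArg Prod.fst h
  refine Prod.ext ?_ h2
  rcases hx with hx | hx
  · have h3 := blockType_eq_zero hx
    have h4 := blockType_eq_zero (h1.symm.trans hx)
    exact sub_left_injective (h3.trans h4.symm)
  · have h3 := blockType_eq_one hx
    have h4 := blockType_eq_one (h1.symm.trans hx)
    exact sub_left_injective (h3.trans h4.symm)

theorem mk_label_ne (i : ZMod m) {x y x' y' : ZMod m × Fin 6} (h : s(x', y') ≠ s(x, y))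
    (hx : (label i x).1 = 0 ∨ (label i x).1 = 1) (hy : (label i y).1 = 0 ∨ (label i y).1 = 1) :
    s(label i x', label i y') ≠ s(label i x, label i y) := by
  intro h'
  apply h
  rw [Sym2.eq_iff] at h' ⊢
  rcases h' with ⟨h1, h2⟩ | ⟨h1, h2⟩
  · exact Or.inl ⟨(label_injOn i h1.symm hx).symm, (label_injOn i h2.symm hy).symm⟩
  · exact Or.inr ⟨(label_injOn i h1.symm hy).symm, (label_injOn i h2.symm hx).symm⟩

namespace Pattern

variable (w : Pattern) (i : ZMod m)

/-- The entry of the pattern at a vertex. -/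
def entry (x : ZMod m × Fin 6) : Option ℤ := w (label i x).1 (label i x).2

/-- The colour of a vertex, as the block and the reflected position of a reference vertex. -/
def colour (x : ZMod m × Fin 6) : Option (ZMod m × ℤ) :=
  (w.entry i x).map fun k => (x.1 - i + ((k / 6 : ℤ) : ZMod m), k % 6)

variable {w i}

theorem colour_eq_of_link (hm : 4 ≤ m) (he : Even m) {x y x' y' : ZMod m × Fin 6}
    (hw : w.LinkCompatible (label i x) (label i y)) (hne : s(x', y') ≠ s(x, y))
    (hx : (label i x).1 = 0 ∨ (label i x).1 = 1) (hy : (label i y).1 = 0 ∨ (label i y).1 = 1)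
    (hx' : w.entry i x' ≠ none) (hy' : w.entry i y' ≠ none) (h : y'.1 = x'.1 + 1) (k : Fin 3)
    (hxk : x'.2 = port (par x'.1) k) (hyk : y'.2 = port (par x'.1) (swap k)) :
    w.colour i x' = w.colour i y' := by
  have hlab := mk_label_ne i hne hx hy
  have hd : y'.1 - i = x'.1 - i + 1 := by rw [h]; ring
  have hp : typePar (blockType (x'.1 - i)) = xor (par i) (par x'.1) := by
    have := par_add hm he (x'.1 - i) i
    rw [sub_add_cancel] at this
    rw [typePar_blockType hm he, this]
    cases par i <;> cases par (x'.1 - i) <;> rfl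
  have hlx : label i x' = (blockType (x'.1 - i), port (typePar (blockType (x'.1 - i))) k) := by
    rw [label, hxk, orient_port, hp]
  have hly : label i y' = (blockType (x'.1 - i + 1),
      port (typePar (blockType (x'.1 - i))) (swap k)) := by
    rw [label, hyk, orient_port, hp, hd]
  have key := hw _ _ (blockType_add_one hm he (x'.1 - i)) k
  rw [hlx, hly] at hlab
  simp only [entry, hlx, hly] at hx' hy'
  have key := key hx' hy' hlab
  simp only [colour, entry, hlx, hly, hd]
  rw [key, Option.map_map]
  congr 1
  funext k
  simp only [Function.comp_apply, Prod.mk.injEq]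
  refine ⟨?_, by omega⟩
  rw [show (6 + k) / 6 = 1 + k / 6 by omega]
  push_cast
  ring

theorem colour_eq_of_adj (hm : 4 ≤ m) (he : Even m) {x y x' y' : ZMod m × Fin 6}
    (hw : w.Valid (label i x) (label i y)) (hne : s(x', y') ≠ s(x, y))
    (hx : (label i x).1 = 0 ∨ (label i x).1 = 1) (hy : (label i y).1 = 0 ∨ (label i y).1 = 1)
    (hx' : w.entry i x' ≠ none) (hy' : w.entry i y' ≠ none) (h : (Gm m).Adj x' y') :
    w.colour i x' = w.colour i y' := by
  rcases gm_adj_cases h with ⟨h1, h2⟩ | ⟨h1, k, h2, h3⟩ | ⟨h1, k, h2, h3⟩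
  · have hlab := mk_label_ne i hne hx hy
    have key := hw.1 (blockType (x'.1 - i)) _ _ (blockAdj_orient (par i) _ _ h2)
    simp only [label, ← h1] at hlab
    simp only [entry, label, ← h1] at hx' hy'
    simp only [colour, entry, label, ← h1]
    rw [key hx' hy' hlab]
  · exact colour_eq_of_link hm he hw.2.1 hne hx hy hx' hy' h1 k h2 h3
  · rw [Sym2.eq_swap] at hne
    exact (colour_eq_of_link hm he hw.2.1 hne hx hy hy' hx' h1 k h2 h3).symm

theorem card_filter_label [NeZero m] (P : Fin 6 × Fin 6 → Prop) [DecidablePred P] :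
    (Finset.univ.filter fun x => P (label i x)).card =
      ∑ d : ZMod m, (Finset.univ.filter fun j => P (blockType d, j)).card := by
  simp only [Finset.card_filter]
  rw [Fintype.sum_prod_type, ← Equiv.sum_comp (Equiv.subRight i) fun d =>
    ∑ j, if P (blockType d, j) then 1 else 0]
  refine Finset.sum_congr rfl fun d _ => ?_
  have hinv : Function.Involutive (orient (par i)) := orient_orient (par i)
  exact Equiv.sum_comp hinv.toPerm fun j => if P (blockType (d - i), j) then 1 else 0

theorem Deficient.sum_excess_neg (hw : w.Deficient) (hm : 4 ≤ m) (he : Even m) [NeZero m] :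
    ∑ d : ZMod m, w.excess (blockType d) < 0 := by
  have h : ∑ d : ZMod m, (w.potential (blockType d) + w.excess (blockType d)) <
      ∑ d : ZMod m, w.potential (blockType (d + 1)) := by
    refine Finset.sum_lt_sum (fun d _ => ?_) ⟨0, Finset.mem_univ _, ?_⟩
    · have := hw.1 _ _ (blockType_add_one hm he d)
      split_ifs at this <;> omega
    · have := hw.1 _ _ (blockType_add_one hm he (0 : ZMod m))
      rw [if_pos blockType_zero] at this
      omega
  have h' := Equiv.sum_comp (Equiv.addRight (1 : ZMod m)) fun d => w.potential (blockType d)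
  simp only [Equiv.coe_addRight] at h'
  rw [h', Finset.sum_add_distrib] at h
  omega

theorem Valid.exists_deleted (hm : 4 ≤ m) (he : Even m) {x y : ZMod m × Fin 6}
    (hw : w.Valid (label i x) (label i y))
    (hx : (label i x).1 = 0 ∨ (label i x).1 = 1) (hy : (label i y).1 = 0 ∨ (label i y).1 = 1) :
    ∃ S : Set (ZMod m × Fin 6), 2 ≤ numComp ((Gm m).deleteEdges {s(x, y)}) S ∧
      2 * S.ncard < 3 * numComp ((Gm m).deleteEdges {s(x, y)}) S := by
  have : NeZero m := ⟨by omega⟩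
  let S : Finset (ZMod m × Fin 6) :=
    Finset.univ.filter fun x => w (label i x).1 (label i x).2 = none
  let F : Finset (ZMod m × Fin 6) :=
    Finset.univ.filter fun x => w (label i x).1 (label i x).2 = some ((label i x).2 : ℤ)
  have hS : S.card = ∑ d : ZMod m, deleted none (w (blockType d)) :=
    card_filter_label fun l => w l.1 l.2 = none
  have hF : F.card = ∑ d : ZMod m, (w.reps (blockType d)).card :=
    card_filter_label fun l => w l.1 l.2 = some (l.2 : ℤ)
  have hcard : F.card ≤ numComp ((Gm m).deleteEdges {s(x, y)}) S := by
    refine card_le_numComp _ _ F (w.colour i) ?_ ?_ ?_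
    · intro x' y' h hx' hy'
      rw [SimpleGraph.deleteEdges_adj] at h
      simp only [S, Finset.coe_filter, Finset.mem_univ, true_and, Set.mem_ofPred_eq] at hx' hy'
      exact colour_eq_of_adj hm he hw h.2 hx hy hx' hy' h.1
    · intro x' hx'
      simp only [F, Finset.mem_filter, Finset.mem_univ, true_and] at hx'
      simp [S, hx']
    · intro x' hx' y' hy' h
      simp only [F, Finset.coe_filter, Finset.mem_univ, true_and, Set.mem_ofPred_eq] at hx' hy'
      have hdiv : ∀ j : Fin 6, (j : ℤ) / 6 = 0 ∧ (j : ℤ) % 6 = j := by decide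
      simp only [colour, entry, hx', hy', Option.map_some, Option.some.injEq, Prod.mk.injEq,
        (hdiv _).1, (hdiv _).2, Int.cast_zero, add_zero] at h
      refine Prod.ext (sub_left_injective h.1) ?_
      have h2 : orient (par i) x'.2 = orient (par i) y'.2 := Fin.ext (by exact_mod_cast h.2)
      rw [← orient_orient (par i) x'.2, h2, orient_orient]
  have h2 : 2 ≤ F.card := by
    rw [hF]
    refine le_trans ?_ (Finset.single_le_sum (f := fun d : ZMod m => (w.reps (blockType d)).card)
      (fun _ _ => Nat.zero_le _) (Finset.mem_univ 2))
    simpa only [blockType_two hm] using hw.2.2.2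
  have hneg := hw.2.2.sum_excess_neg hm he
  simp only [excess, Finset.sum_sub_distrib, ← Finset.mul_sum] at hneg
  rw [← Nat.cast_sum, ← Nat.cast_sum, ← hS, ← hF] at hneg
  refine ⟨S, by omega, ?_⟩
  rw [Set.ncard_coe_finset]
  omega

end Pattern

theorem exists_deleted_of_blockAdj (hm : 4 ≤ m) (he : Even m) (i : ZMod m) {a b : Fin 6}
    (h : blockAdj a b) : ∃ S : Set (ZMod m × Fin 6),
      2 ≤ numComp ((Gm m).deleteEdges {s((i, a), (i, b))}) S ∧
      2 * S.ncard < 3 * numComp ((Gm m).deleteEdges {s((i, a), (i, b))}) S := by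
  by_cases hne : s(orient (par i) a, orient (par i) b) = s(4, 0)
  · have hl : ∀ c : Fin 6, label (i - 1) (i, c) = (1, orient (!par i) c) := by
      intro c
      have hp : (!par i) = par (i - 1) := by
        have := par_add_one hm he (i - 1)
        rw [sub_add_cancel] at this
        rw [this, Bool.not_not]
      rw [label, sub_sub_cancel, blockType_one hm, hp]
    have key : ∀ (p : Bool) (a b : Fin 6), s(orient p a, orient p b) = s(4, 0) →
        orient (!p) a = 3 ∧ orient (!p) b = 4 ∨ orient (!p) a = 4 ∧ orient (!p) b = 3 := by
      decide
    obtain ⟨w, hw⟩ := exists_valid_last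
    refine Pattern.Valid.exists_deleted (w := w) (i := i - 1) hm he ?_ ?_ ?_
    · rw [hl, hl]
      rcases key _ _ _ hne with ⟨h1, h2⟩ | ⟨h1, h2⟩
      · rwa [h1, h2]
      · rw [h1, h2]
        exact hw.symm
    · simp [hl]
    · simp [hl]
  · have hl : ∀ c : Fin 6, label i (i, c) = (0, orient (par i) c) := by
      intro c
      rw [label, sub_self, blockType_zero]
    obtain ⟨w, hw⟩ := exists_valid_block _ _ (blockAdj_orient _ _ _ h) hne
    refine Pattern.Valid.exists_deleted (w := w) (i := i) hm he ?_ ?_ ?_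
    · rwa [hl, hl]
    · simp [hl]
    · simp [hl]

theorem exists_deleted_of_link (hm : 4 ≤ m) (he : Even m) (i : ZMod m) (k : Fin 3) :
    ∃ S : Set (ZMod m × Fin 6),
      2 ≤ numComp ((Gm m).deleteEdges
        {s((i, port (par i) k), (i + 1, port (par i) (swap k)))}) S ∧
      2 * S.ncard < 3 * numComp ((Gm m).deleteEdges
        {s((i, port (par i) k), (i + 1, port (par i) (swap k)))}) S := by
  obtain ⟨w, hw⟩ := exists_valid_link k
  have h0 : label i (i, port (par i) k) = (0, port false k) := by
    rw [label, sub_self, blockType_zero, orient_port, Bool.xor_self]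
  have h1 : label i (i + 1, port (par i) (swap k)) = (1, port false (swap k)) := by
    rw [label, add_sub_cancel_left, blockType_one hm, orient_port, Bool.xor_self]
  refine Pattern.Valid.exists_deleted (w := w) (i := i) hm he ?_ ?_ ?_
  · rwa [h0, h1]
  · simp [h0]
  · simp [h1]

theorem gm_deleteEdges_not_tough (hm : 4 ≤ m) (he : Even m) {e : Sym2 (ZMod m × Fin 6)}
    (h : e ∈ (Gm m).edgeSet) : ∃ S : Set (ZMod m × Fin 6),
      2 ≤ numComp ((Gm m).deleteEdges {e}) S ∧
      2 * S.ncard < 3 * numComp ((Gm m).deleteEdges {e}) S := by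
  induction e with
  | h x y =>
    obtain ⟨i, a⟩ := x
    obtain ⟨j, b⟩ := y
    rcases gm_adj_cases h with ⟨h1, h2⟩ | ⟨h1, k, h2, h3⟩ | ⟨h1, k, h2, h3⟩
    · dsimp only at h1 h2
      subst h1
      exact exists_deleted_of_blockAdj hm he _ h2
    · dsimp only at h1 h2 h3
      subst h1 h2 h3
      exact exists_deleted_of_link hm he _ k
    · dsimp only at h1 h2 h3
      subst h1 h2 h3
      rw [Sym2.eq_swap]
      exact exists_deleted_of_link hm he _ k

end Minimality

end GmTough

/-- for every even `m ≥ 4`, the graph `G_m` is minimally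
3/2-tough: it is 3/2-tough, and for every edge `e` there is a vertex set `S`
with `ω((G_m − e) − S) ≥ 2` and `2|S| < 3·ω((G_m − e) − S)`. -/
theorem Gm_minimally_three_halves_tough (m : ℕ) (hm4 : 4 ≤ m) (hme : Even m) :
    (∀ S : Set (ZMod m × Fin 6), 2 ≤ numComp (Gm m) S →
      3 * numComp (Gm m) S ≤ 2 * S.ncard) ∧
    (∀ e ∈ (Gm m).edgeSet, ∃ S : Set (ZMod m × Fin 6),
      2 ≤ numComp ((Gm m).deleteEdges {e}) S ∧
      2 * S.ncard < 3 * numComp ((Gm m).deleteEdges {e}) S) := by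
  exact ⟨fun S hS => GmTough.gm_tough hm4 hme S hS,
    fun _ he => GmTough.gm_deleteEdges_not_tough hm4 hme he⟩
end

section
/- There exists a finite simple graph G on 12 vertices that is 7-regular and minimally 3-tough. -/
open SimpleGraph

/-- `G` is `t`-tough: whenever deleting `S` leaves at least two components,
`|S| ≥ t · ω(G − S)`. -/
def Tough {V : Type*} (t : ℝ) (G : SimpleGraph V) : Prop :=
  ∀ S : Set V, 2 ≤ numComp G S → t * (numComp G S : ℝ) ≤ (S.ncard : ℝ)

/-- `G` is minimally `t`-tough: `G` is `t`-tough and deleting any edge destroys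
`t`-toughness. -/
def MinTough {V : Type*} (t : ℝ) (G : SimpleGraph V) : Prop :=
  Tough t G ∧ ∀ e ∈ G.edgeSet, ¬ Tough t (G.deleteEdges {e})

theorem adj_of_component_ne {V : Type*} {H : SimpleGraph V} {S : Set V}
    {x y : (Sᶜ : Set V)}
    (h : (Hᶜ.induce Sᶜ).connectedComponentMk x ≠ (Hᶜ.induce Sᶜ).connectedComponentMk y) :
    H.Adj x y := by
  by_contra hxy
  refine h (ConnectedComponent.sound (Adj.reachable ?_))
  simp only [comap_adj, Function.Embedding.subtype_apply, compl_adj]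
  exact ⟨fun e => h (by rw [Subtype.ext e]), hxy⟩

/-- The complement of a graph `H` on twelve vertices is `3`-tough if `H` has maximum degree at most
`4`, no two triangles sharing an edge, and no three vertices with four common neighbors. -/
theorem tough_three_compl {V : Type*} [Fintype V] (H : SimpleGraph V)
    (hcard : Fintype.card V = 12)
    (hdeg : ∀ v, (H.neighborSet v).ncard ≤ 4)
    (hdiam : ∀ a b c d, H.Adj a b → H.Adj a c → H.Adj b c → H.Adj a d → H.Adj b d → c = d)
    (hcommon : ∀ a b c, a ≠ b → a ≠ c → b ≠ c →
      (H.neighborSet a ∩ H.neighborSet b ∩ H.neighborSet c).ncard ≤ 3) :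
    Tough (3 : ℝ) Hᶜ := by
  classical
  intro S hS
  have hsum : S.ncard + (Sᶜ : Set V).ncard = 12 := by
    rw [Set.ncard_add_ncard_compl, Nat.card_eq_fintype_card, hcard]
  suffices h : 3 * numComp Hᶜ S ≤ S.ncard by exact_mod_cast h
  let comp := (Hᶜ.induce Sᶜ).connectedComponentMk
  have hcomp : Nat.card (Hᶜ.induce Sᶜ).ConnectedComponent = numComp Hᶜ S := rfl
  rw [Nat.card_eq_fintype_card] at hcomp
  rcases hS.eq_or_lt with h2 | h3
  · -- Exactly two components.
    by_contra hlt
    have hT : 7 ≤ (Sᶜ : Set V).ncard := by omega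
    have hT' : 7 ≤ Fintype.card (Sᶜ : Set V) := by
      rwa [← Nat.card_eq_fintype_card, Nat.card_coe_set_eq]
    obtain ⟨c, hc⟩ := Fintype.exists_lt_card_fiber_of_mul_lt_card (n := 3) comp (by
      rw [hcomp]; omega)
    obtain ⟨c', hc'⟩ := Fintype.exists_ne_of_one_lt_card (by omega) c
    obtain ⟨y, rfl⟩ := c'.exists_rep
    have hP : (Finset.univ.filter fun x => comp x = c).card ≤ 4 := by
      refine le_trans ?_ (hdeg y)
      rw [← Set.ncard_coe_finset, ← Set.ncard_image_of_injective _ Subtype.val_injective]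
      refine Set.ncard_le_ncard ?_ (Set.toFinite _)
      rintro _ ⟨x, hx, rfl⟩
      simp only [Finset.coe_filter, Finset.mem_univ, true_and, Set.mem_ofPred_eq] at hx
      exact adj_of_component_ne fun e => hc' (e.trans hx)
    have hQ : 2 < (Finset.univ.filter fun x => ¬ comp x = c).card := by
      have := Finset.card_filter_add_card_filter_not (s := Finset.univ) (fun x => comp x = c)
      rw [Finset.card_univ] at this
      omega
    obtain ⟨x, hx, z, hz, w, hw, hxz, hxw, hzw⟩ := Finset.two_lt_card.1 hQ
    simp only [Finset.mem_filter, Finset.mem_univ, true_and] at hx hz hw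
    have := hcommon x z w (Subtype.coe_ne_coe.2 hxz) (Subtype.coe_ne_coe.2 hxw)
      (Subtype.coe_ne_coe.2 hzw)
    refine absurd (hc.trans_le ?_) this.not_gt
    rw [← Set.ncard_coe_finset, ← Set.ncard_image_of_injective _ Subtype.val_injective]
    refine Set.ncard_le_ncard ?_ (Set.toFinite _)
    rintro _ ⟨p, hp, rfl⟩
    simp only [Finset.coe_filter, Finset.mem_univ, true_and, Set.mem_ofPred_eq] at hp
    exact ⟨⟨adj_of_component_ne fun e => hx (e.trans hp),
      adj_of_component_ne fun e => hz (e.trans hp)⟩,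
      adj_of_component_ne fun e => hw (e.trans hp)⟩
  · -- At least three components: then each vertex of `Sᶜ` is one of three representatives.
    have h3' : 2 < (Finset.univ : Finset (Hᶜ.induce Sᶜ).ConnectedComponent).card := by
      rwa [Finset.card_univ, hcomp]
    obtain ⟨ca, -, cb, -, cc, -, hab, hac, hbc⟩ := Finset.two_lt_card.1 h3'
    obtain ⟨a, rfl⟩ := ca.exists_rep
    obtain ⟨b, rfl⟩ := cb.exists_rep
    obtain ⟨c, rfl⟩ := cc.exists_rep
    have key : ∀ {a b c x : (Sᶜ : Set V)}, comp a ≠ comp b → comp a ≠ comp c → comp b ≠ comp c →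
        comp a ≠ comp x → comp b ≠ comp x → x = c := fun h1 h2 h3 h4 h5 =>
      Subtype.ext (hdiam _ _ _ _ (adj_of_component_ne h1) (adj_of_component_ne h2)
        (adj_of_component_ne h3) (adj_of_component_ne h4) (adj_of_component_ne h5)).symm
    have hall : ∀ x : (Sᶜ : Set V), x = a ∨ x = b ∨ x = c := by
      intro x
      by_cases hxa : comp a = comp x
      · exact Or.inl (key hbc (Ne.symm hab) (Ne.symm hac) (fun e => hab (hxa.trans e.symm))
          (fun e => hac (hxa.trans e.symm)))
      by_cases hxb : comp b = comp x
      · exact Or.inr (Or.inl (key hac hab (Ne.symm hbc) hxa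
          (fun e => hbc (hxb.trans e.symm))))
      · exact Or.inr (Or.inr (key hab hac hbc hxa hxb))
    have hT : (Sᶜ : Set V).ncard ≤ 3 := by
      rw [← Nat.card_coe_set_eq, Nat.card_eq_fintype_card, ← Finset.card_univ]
      refine (Finset.card_le_card (t := {a, b, c}) fun x _ => ?_).trans Finset.card_le_three
      simpa using hall x
    have hk : numComp Hᶜ S ≤ (Sᶜ : Set V).ncard := by
      rw [← Nat.card_coe_set_eq]
      exact Nat.card_le_card_of_surjective comp fun q => q.exists_rep
    omega

/-- On twelve vertices, four distinct vertices inducing no edge other than one between `r` and `s`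
obstruct `3`-toughness. -/
theorem not_tough_three_of_four {V : Type*} [Fintype V] (G : SimpleGraph V)
    (hcard : Fintype.card V = 12) {p q r s : V}
    (hpq : p ≠ q) (hpr : p ≠ r) (hps : p ≠ s) (hqr : q ≠ r) (hqs : q ≠ s) (hrs : r ≠ s)
    (npq : ¬ G.Adj p q) (npr : ¬ G.Adj p r) (nps : ¬ G.Adj p s)
    (nqr : ¬ G.Adj q r) (nqs : ¬ G.Adj q s) : ¬ Tough (3 : ℝ) G := by
  classical
  intro h
  let T : Set V := {p, q, r, s}
  have hT : T.ncard = 4 := by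
    have : T = (({p, q, r, s} : Finset V) : Set V) := by simp [T]
    rw [this, Set.ncard_coe_finset]
    simp [*]
  let f : V → Fin 3 := fun x => if x = p then 0 else if x = q then 1 else 2
  have hf : ∀ x y : (Tᶜᶜ : Set V), (G.induce Tᶜᶜ).Adj x y → f x = f y := by
    rintro ⟨x, hx⟩ ⟨y, hy⟩ hxy
    simp only [comap_adj, Function.Embedding.subtype_apply] at hxy
    rw [compl_compl] at hx hy
    have hyx := hxy.symm
    rcases hx with rfl | rfl | rfl | rfl <;> rcases hy with rfl | rfl | rfl | rfl <;>
      simp_all [f, eq_comm]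
  let F : (G.induce Tᶜᶜ).ConnectedComponent → Fin 3 :=
    ConnectedComponent.lift (fun x => f x) fun x y w _ => by
      induction w with
      | nil => rfl
      | cons hxy _ ih => exact (hf _ _ hxy).trans (ih (by simp_all))
  have hF : Function.Surjective F := by
    intro i
    have mem : ∀ x ∈ T, x ∈ Tᶜᶜ := fun x hx => by rwa [compl_compl]
    have hmk : ∀ x (hx : x ∈ T), F ((G.induce Tᶜᶜ).connectedComponentMk ⟨x, mem x hx⟩) = f x :=
      fun _ _ => rfl
    fin_cases i
    · exact ⟨_, (hmk p (by simp [T])).trans (by simp [f])⟩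
    · exact ⟨_, (hmk q (by simp [T])).trans (by simp [f, hpq.symm])⟩
    · exact ⟨_, (hmk r (by simp [T])).trans (by simp [f, hpr.symm, hqr.symm])⟩
  have hk : 3 ≤ numComp G Tᶜ :=
    (Nat.card_fin 3).symm.trans_le (Nat.card_le_card_of_surjective F hF)
  have hS : 3 * numComp G Tᶜ ≤ (Tᶜ : Set V).ncard := by
    exact_mod_cast h Tᶜ (by omega)
  have hsum := Set.ncard_add_ncard_compl T
  rw [Nat.card_eq_fintype_card, hcard] at hsum
  omega

/-- The rows of the adjacency matrix of `sparseGraph`, as bit masks. -/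
def adjMask : Fin 12 → ℕ :=
  ![2210, 533, 90, 1220, 1286, 833, 2092, 1545, 3120, 2210, 408, 833]

/-- A `4`-regular graph in which no two triangles share an edge, and which is edge-maximal with
this property. -/
def sparseGraph : SimpleGraph (Fin 12) where
  Adj u v := (adjMask u).testBit v = true
  symm := ⟨by decide +kernel⟩
  loopless := ⟨by decide +kernel⟩

instance : DecidableRel sparseGraph.Adj := fun u v =>
  inferInstanceAs (Decidable ((adjMask u).testBit v = true))

theorem sparseGraph_degree (v : Fin 12) : sparseGraph.degree v = 4 := by
  revert v
  decide +kernel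

theorem sparseGraph_diamond_free (a b c d : Fin 12) : sparseGraph.Adj a b → sparseGraph.Adj a c →
    sparseGraph.Adj b c → sparseGraph.Adj a d → sparseGraph.Adj b d → c = d := by
  have : ∀ a b, sparseGraph.Adj a b → ∀ c, sparseGraph.Adj a c → sparseGraph.Adj b c →
      ∀ d, sparseGraph.Adj a d → sparseGraph.Adj b d → c = d := by decide +kernel
  exact fun h1 h2 h3 h4 h5 => this a b h1 c h2 h3 d h4 h5

theorem sparseGraph_card_common (a b c : Fin 12) : a ≠ b → a ≠ c → b ≠ c →
    (Finset.univ.filter fun x =>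
      sparseGraph.Adj a x ∧ sparseGraph.Adj b x ∧ sparseGraph.Adj c x).card ≤ 3 := by
  revert a b c
  decide +kernel

/-- Adding an edge between nonadjacent vertices `u` and `v` creates two triangles sharing an edge:
the new edge is either the shared one, or joins the apex `u` to the end `v` of the shared edge, or
the same with `u` and `v` exchanged. -/
theorem sparseGraph_maximal (u v : Fin 12) : u ≠ v → ¬ sparseGraph.Adj u v →
    (∃ r, sparseGraph.Adj u r ∧ sparseGraph.Adj v r ∧
      ((∃ s, r ≠ s ∧ sparseGraph.Adj u s ∧ sparseGraph.Adj v s) ∨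
       (∃ s, sparseGraph.Adj r s ∧ sparseGraph.Adj v s ∧ s ≠ u) ∨
       (∃ s, sparseGraph.Adj r s ∧ sparseGraph.Adj u s ∧ s ≠ v))) := by
  revert u v
  decide +kernel

theorem minTough_compl_sparseGraph : MinTough (3 : ℝ) sparseGraphᶜ := by
  constructor
  · refine tough_three_compl _ (by simp) (fun v => ?_) sparseGraph_diamond_free
      fun a b c hab hac hbc => ?_
    · rw [Set.ncard_eq_toFinset_card', Set.toFinset_card, card_neighborSet_eq_degree,
        sparseGraph_degree]
    · refine le_trans (le_of_eq ?_) (sparseGraph_card_common a b c hab hac hbc)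
      rw [← Set.ncard_coe_finset]
      congr 1
      ext x
      simp [and_assoc]
  · intro e
    induction e using Sym2.ind with
    | _ u v =>
    intro he
    rw [mem_edgeSet, compl_adj] at he
    obtain ⟨huv, hn⟩ := he
    have hdel : ¬ (sparseGraphᶜ.deleteEdges {s(u, v)}).Adj u v := by simp
    have hdel' : ¬ (sparseGraphᶜ.deleteEdges {s(u, v)}).Adj v u := fun h => hdel h.symm
    have hH : ∀ {x y}, sparseGraph.Adj x y →
        ¬ (sparseGraphᶜ.deleteEdges {s(u, v)}).Adj x y := by
      intro x y hxy h
      rw [deleteEdges_adj, compl_adj] at h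
      exact h.1.2 hxy
    obtain ⟨r, hur, hvr, ⟨s, hrs, hus, hvs⟩ | ⟨s, hrs, hvs, hsu⟩ | ⟨s, hrs, hus, hsv⟩⟩ :=
      sparseGraph_maximal u v huv hn
    · exact not_tough_three_of_four _ (by simp) huv hur.ne hus.ne hvr.ne hvs.ne hrs
        hdel (hH hur) (hH hus) (hH hvr) (hH hvs)
    · exact not_tough_three_of_four _ (by simp) hvr.ne huv.symm hvs.ne hur.ne' hrs.ne hsu.symm
        (hH hvr) hdel' (hH hvs) (hH hur.symm) (hH hrs)
    · exact not_tough_three_of_four _ (by simp) hur.ne huv hus.ne hvr.ne' hrs.ne hsv.symm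
        (hH hur) hdel (hH hus) (hH hvr.symm) (hH hrs)

/-- there exists a finite simple graph on 12 vertices that is
7-regular and minimally 3-tough. -/
theorem exists_seven_regular_minimally_three_tough_on_twelve_vertices :
    ∃ (V : Type) (_ : Fintype V) (G : SimpleGraph V),
      Fintype.card V = 12 ∧
      (∀ v : V, ndeg G v = 7) ∧
      MinTough (3 : ℝ) G := by
  refine ⟨Fin 12, inferInstance, sparseGraphᶜ, by simp, fun v => ?_, minTough_compl_sparseGraph⟩
  rw [ndeg, Set.ncard_eq_toFinset_card', Set.toFinset_card, card_neighborSet_eq_degree,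
    degree_compl, sparseGraph_degree]
  simp
end
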